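/- arXiv:2105.02355 — 4 statements merged into one kernel-verified Lean document; each statement's English description precedes it below -/
import Mathlib

section
/- Let (Δ; Ω, ≤) be a homological system over an Artin algebra Λ, with height function h, let M be a nonzero module in F(Δ), and let F = {0 = M_0 ⊊ M_1 ⊊ ⋯ ⊊ M_t = M} be a Δ-filtration of M. Then there exists a Δ-filtration F' = {0 = M'_0 ⊊ M'_1 ⊊ ⋯ ⊊ M'_t = M} of M with ℓ_ω(F) = ℓ_ω(F') for every ω ∈ Ω, and such that whenever 1 ≤ i ≤ j ≤ t, M'_i/M'_{i-1} ≅ Δ_ω and M'_j/M'_{j-1} ≅ Δ_{ω'}, one has h(ω) ≥ h(ω'); that is, the heights of the filtration factors are weakly decreasing along the filtration. -/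
/-!
If `h ω < h ω'`, then `ω' ≰ ω`, so every extension of `Δ ω'` by `Δ ω` splits. Hence whenever two
consecutive factors `Δ ω`, `Δ ω'` of a filtration occur in the wrong order, say
`B / A ≅ Δ ω` and `C / B ≅ Δ ω'`, there is a complement `N / A` of `B / A` in `C / A`, and
replacing `B` by `N` interchanges the two factors (second isomorphism theorem). Among all the
reorderings of the factors reachable by such adjacent exchanges, a colexicographically smallest one
has decreasing heights.
-/

universe u v

open DirectSum

/-- The height function of a finite preordered set `Ω`: `h ω` is `1` plus the length of the
longest strict chain `ω₀ < ω₁ < ⋯ < ωₙ = ω` ending at `ω` (so minimal elements have height 1). -/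
noncomputable def heightFun {Ω : Type v} [Preorder Ω] [Fintype Ω] (ω : Ω) : ℕ :=
  1 + (⨆ (p : LTSeries Ω) (_ : p.last = ω), (p.length : ℕ∞)).toNat

/-- `EverySESSplits Λ A B` says that every short exact sequence of `Λ`-modules
`0 → A → E → B → 0` splits; this is the statement `Ext¹_Λ(B, A) = 0`. -/
def EverySESSplits (Λ : Type u) [Ring Λ] (A B : Type u)
    [AddCommGroup A] [Module Λ A] [AddCommGroup B] [Module Λ B] : Prop :=
  ∀ (E : Type u) [AddCommGroup E] [Module Λ E] (f : A →ₗ[Λ] E) (g : E →ₗ[Λ] B),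
    Function.Injective f → Function.Surjective g → LinearMap.range f = LinearMap.ker g →
      ∃ s : B →ₗ[Λ] E, g.comp s = LinearMap.id

/-- A homological system `(Δ; Ω, ≤)` over the ring `Λ`:
`Ω` is a finite (pre)ordered index set; the `Δ ω` are pairwise nonisomorphic indecomposable
finitely generated `Λ`-modules satisfying (HS3) `Hom (Δ ω, Δ ω') ≠ 0 → ω ≤ ω'` and
(HS4) `Ext¹ (Δ ω, Δ ω') ≠ 0 → ω ≤ ω' ∧ ¬ ω' ≤ ω` (the latter expressed contrapositively via
splitting of all short exact sequences `0 → Δ ω' → E → Δ ω → 0`). -/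
structure IsHomologicalSystem (Λ : Type u) [Ring Λ] {Ω : Type v} [Preorder Ω] [Fintype Ω]
    (Δ : Ω → Type u) [∀ ω, AddCommGroup (Δ ω)] [∀ ω, Module Λ (Δ ω)] : Prop where
  fg : ∀ ω, Module.Finite Λ (Δ ω)
  nontrivial : ∀ ω, Nontrivial (Δ ω)
  indecomposable : ∀ ω (A B : Submodule Λ (Δ ω)), IsCompl A B → A = ⊥ ∨ B = ⊥
  pairwise_nonIso : ∀ ω ω', ω ≠ ω' → IsEmpty (Δ ω ≃ₗ[Λ] Δ ω')
  hs3 : ∀ ω ω' (f : Δ ω →ₗ[Λ] Δ ω'), f ≠ 0 → ω ≤ ω'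
  hs4 : ∀ ω ω', ¬(ω ≤ ω' ∧ ¬ ω' ≤ ω) → EverySESSplits Λ (Δ ω') (Δ ω)

/-- `IsDeltaFiltration Λ Δ t F` says that `⊥ = F 0 ⊊ F 1 ⊊ ⋯ ⊊ F t = ⊤` is a `Δ`-filtration
of `M`, i.e. each factor `F (i+1) / F i` is isomorphic to some `Δ ω`. -/
def IsDeltaFiltration (Λ : Type u) [Ring Λ] {Ω : Type v} [Preorder Ω] [Fintype Ω]
    (Δ : Ω → Type u) [∀ ω, AddCommGroup (Δ ω)] [∀ ω, Module Λ (Δ ω)]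
    {M : Type u} [AddCommGroup M] [Module Λ M]
    (t : ℕ) (F : Fin (t + 1) → Submodule Λ M) : Prop :=
  F 0 = ⊥ ∧ F (Fin.last t) = ⊤ ∧ StrictMono F ∧
    ∀ i : Fin t, ∃ ω : Ω,
      Nonempty ((F i.succ ⧸ (F i.castSucc).comap (F i.succ).subtype) ≃ₗ[Λ] Δ ω)

/-- `M ∈ 𝔉(Δ)`: the `Λ`-module `M` admits a `Δ`-filtration. -/
def MemFiltCat (Λ : Type u) [Ring Λ] {Ω : Type v} [Preorder Ω] [Fintype Ω]
    (Δ : Ω → Type u) [∀ ω, AddCommGroup (Δ ω)] [∀ ω, Module Λ (Δ ω)]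
    (M : Type u) [AddCommGroup M] [Module Λ M] : Prop :=
  ∃ (t : ℕ) (F : Fin (t + 1) → Submodule Λ M), IsDeltaFiltration Λ Δ t F

/-- `ℓ_ω(F)`: the number of factors of the filtration `F` isomorphic to `Δ ω`. -/
noncomputable def ellOmega (Λ : Type u) [Ring Λ] {Ω : Type v} [Preorder Ω] [Fintype Ω]
    (Δ : Ω → Type u) [∀ ω, AddCommGroup (Δ ω)] [∀ ω, Module Λ (Δ ω)]
    {M : Type u} [AddCommGroup M] [Module Λ M]
    (t : ℕ) (F : Fin (t + 1) → Submodule Λ M) (ω : Ω) : ℕ :=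
  Nat.card {i : Fin t //
    Nonempty ((F i.succ ⧸ (F i.castSucc).comap (F i.succ).subtype) ≃ₗ[Λ] Δ ω)}

/-- An `h`-filtration `0 = W (a+1) ⊆ W a ⊆ ⋯ ⊆ W 1 = M` of `M`: the `i`-th layer
`W i / W (i+1)` is a finite direct sum `⨁_{ω : h ω = i} (n ω) • Δ ω` of copies of the `Δ ω`
with `heightFun ω = i`. -/
def IsHFiltration (Λ : Type u) [Ring Λ] {Ω : Type v} [Preorder Ω] [Fintype Ω]
    (Δ : Ω → Type u) [∀ ω, AddCommGroup (Δ ω)] [∀ ω, Module Λ (Δ ω)]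
    {M : Type u} [AddCommGroup M] [Module Λ M]
    (a : ℕ) (W : ℕ → Submodule Λ M) (n : Ω → ℕ) : Prop :=
  W (a + 1) = ⊥ ∧ W 1 = ⊤ ∧ (∀ i, 1 ≤ i → i ≤ a → W (i + 1) ≤ W i) ∧
    ∀ i, 1 ≤ i → i ≤ a →
      Nonempty ((W i ⧸ (W (i + 1)).comap (W i).subtype) ≃ₗ[Λ]
        ⨁ ω : {ω : Ω // heightFun ω = i}, (Fin (n ω.1) → Δ ω.1))

/-- The trace `tr_L(N)` of `L` in `N`: the sum of the images of all `Λ`-homomorphisms `L → N`. -/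
def traceSubmodule (Λ : Type u) [Ring Λ] (L N : Type u)
    [AddCommGroup L] [Module Λ L] [AddCommGroup N] [Module Λ N] : Submodule Λ N :=
  ⨆ f : L →ₗ[Λ] N, LinearMap.range f

theorem exists_perm_antitone_of_covBy_swap {ι β α : Type*} [LinearOrder ι] [LocallyFiniteOrder ι]
    [Finite ι] [LinearOrder α] (f : β → α) {P : (ι → β) → Prop} {w : ι → β} (hw : P w)
    (hswap : ∀ (w : ι → β) (i j : ι), i ⋖ j → f (w i) < f (w j) → P w → P (w ∘ Equiv.swap i j)) :
    ∃ σ : Equiv.Perm ι, P (w ∘ σ) ∧ Antitone (f ∘ w ∘ σ) := by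
  obtain ⟨σ, hσ, hmin⟩ := Set.Finite.exists_minimalFor (fun σ : Equiv.Perm ι ↦ toColex (f ∘ w ∘ σ))
    {σ | P (w ∘ σ)} (Set.toFinite _) ⟨1, hw⟩
  refine ⟨σ, hσ, (antitone_iff_forall_covBy _).2 fun i j hij ↦ ?_⟩
  by_contra! hlt
  have hdesc : toColex (f ∘ w ∘ ⇑(σ * Equiv.swap i j)) < toColex (f ∘ w ∘ σ) :=
    Pi.colex_asc hij.le hlt
  exact hdesc.not_ge (hmin (hswap _ i j hij hlt hσ) hdesc.le)

theorem forall_fin_step_update_succ {β X : Type*} {r : β → X → X → Prop} {t : ℕ}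
    {F : Fin (t + 1) → X} {w : Fin t → β} (hF : ∀ k, r (w k) (F k.castSucc) (F k.succ))
    {i j : Fin t} (hij : i.succ = j.castSucc) {x : X} (hi : r (w j) (F i.castSucc) x)
    (hj : r (w i) x (F j.succ)) (k : Fin t) :
    r (w (Equiv.swap i j k)) (Function.update F i.succ x k.castSucc)
      (Function.update F i.succ x k.succ) := by
  rcases eq_or_ne k i with rfl | hki
  · rwa [Equiv.swap_apply_left, Function.update_self,
      Function.update_of_ne Fin.castSucc_lt_succ.ne]
  rcases eq_or_ne k j with rfl | hkj
  · rwa [Equiv.swap_apply_right, ← hij, Function.update_self,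
      Function.update_of_ne (hij ▸ Fin.castSucc_lt_succ.ne')]
  · rw [Equiv.swap_apply_of_ne_of_ne hki hkj, Function.update_of_ne (hij ▸ by simpa using hkj),
      Function.update_of_ne (by simpa using hki)]
    exact hF k

section Splitting

variable {Λ : Type u} [Ring Λ]

theorem EverySESSplits.exists_isCompl_range {D D' E : Type u} [AddCommGroup D] [Module Λ D]
    [AddCommGroup D'] [Module Λ D'] [AddCommGroup E] [Module Λ E] (h : EverySESSplits Λ D D')
    {f : D →ₗ[Λ] E} {g : E →ₗ[Λ] D'} (hf : Function.Injective f) (hg : Function.Surjective g)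
    (hfg : LinearMap.range f = LinearMap.ker g) :
    ∃ N : Submodule Λ E, IsCompl N (LinearMap.range f) := by
  obtain ⟨s, hs⟩ := h E f g hf hg hfg
  have hidem : IsIdempotentElem (s ∘ₗ g) := by
    change (s ∘ₗ g) ∘ₗ (s ∘ₗ g) = s ∘ₗ g
    rw [LinearMap.comp_assoc, ← LinearMap.comp_assoc g, hs, LinearMap.id_comp]
  have hker : LinearMap.ker (s ∘ₗ g) = LinearMap.range f := by
    rw [LinearMap.ker_comp_of_ker_eq_bot _ (LinearMap.ker_eq_bot_of_inverse hs), hfg]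
  exact ⟨_, hker ▸ LinearMap.IsIdempotentElem.isCompl hidem⟩

variable {M : Type*} [AddCommGroup M] [Module Λ M]

theorem exists_inf_eq_sup_eq_of_isCompl_map_mkQ {A B C : Submodule Λ M} (hAB : A ≤ B) (hBC : B ≤ C)
    {N : Submodule Λ (C ⧸ A.comap C.subtype)}
    (hN : IsCompl N ((B.comap C.subtype).map (A.comap C.subtype).mkQ)) :
    ∃ N' : Submodule Λ M, N' ⊓ B = A ∧ N' ⊔ B = C := by
  set q := (A.comap C.subtype).mkQ
  have hle : A.comap C.subtype ≤ B.comap C.subtype := Submodule.comap_mono hAB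
  have hB : ((B.comap C.subtype).map q).comap q = B.comap C.subtype := by
    rw [Submodule.comap_map_mkQ, sup_eq_right.2 hle]
  have hinf : N.comap q ⊓ B.comap C.subtype = A.comap C.subtype := by
    rw [← hB, ← Submodule.comap_inf, hN.inf_eq_bot, Submodule.comap_bot, Submodule.ker_mkQ]
  have hsup : N.comap q ⊔ B.comap C.subtype = ⊤ := by
    have hle' : A.comap C.subtype ≤ N.comap q ⊔ B.comap C.subtype := hle.trans le_sup_right
    rw [← sup_eq_right.2 hle', ← Submodule.comap_map_mkQ, Submodule.map_sup,
      Submodule.map_comap_eq_of_surjective (Submodule.mkQ_surjective _), hN.sup_eq_top,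
      Submodule.comap_top]
  have hmap {P : Submodule Λ M} (hP : P ≤ C) : (P.comap C.subtype).map C.subtype = P := by
    rw [Submodule.map_comap_subtype, inf_eq_right.2 hP]
  refine ⟨(N.comap q).map C.subtype, ?_, ?_⟩
  · rw [← hmap hBC, ← Submodule.map_inf _ C.injective_subtype, hinf, hmap (hAB.trans hBC)]
  · rw [← hmap hBC, ← Submodule.map_sup, hsup, Submodule.map_subtype_top]

end Splitting

section Factor

variable {Λ : Type*} [Ring Λ] {M : Type*} [AddCommGroup M] [Module Λ M]

/-- `A ⊊ B` is a step of a filtration of `M` with factor `B / A ≅ D`. -/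
def HasFactor (D : Type*) [AddCommGroup D] [Module Λ D] (A B : Submodule Λ M) : Prop :=
  A < B ∧ Nonempty ((B ⧸ A.comap B.subtype) ≃ₗ[Λ] D)

theorem hasFactor_inf_left_iff {D : Type*} [AddCommGroup D] [Module Λ D] {P Q : Submodule Λ M} :
    HasFactor D (P ⊓ Q) P ↔ HasFactor D Q (P ⊔ Q) := by
  let e : (P ⧸ (P ⊓ Q).comap P.subtype) ≃ₗ[Λ] (↥(P ⊔ Q) ⧸ Q.comap (P ⊔ Q).subtype) :=
    LinearMap.quotientInfEquivSupQuotient P Q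
  exact and_congr (inf_lt_left.trans right_lt_sup.symm)
    ⟨fun ⟨f⟩ ↦ ⟨e.symm.trans f⟩, fun ⟨f⟩ ↦ ⟨e.trans f⟩⟩

end Factor

section Exchange

variable {Λ : Type u} [Ring Λ] {M : Type u} [AddCommGroup M] [Module Λ M]

theorem EverySESSplits.exists_inf_eq_sup_eq {D D' : Type u} [AddCommGroup D] [Module Λ D]
    [AddCommGroup D'] [Module Λ D'] (h : EverySESSplits Λ D D') {A B C : Submodule Λ M}
    (hAB : HasFactor D A B) (hBC : HasFactor D' B C) :
    ∃ N : Submodule Λ M, N ⊓ B = A ∧ N ⊔ B = C := by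
  obtain ⟨hltAB, ⟨eAB⟩⟩ := hAB
  obtain ⟨hltBC, ⟨eBC⟩⟩ := hBC
  have hle : A.comap C.subtype ≤ B.comap C.subtype := Submodule.comap_mono hltAB.le
  let incl : (B ⧸ A.comap B.subtype) →ₗ[Λ] (C ⧸ A.comap C.subtype) :=
    Submodule.mapQ _ _ (Submodule.inclusion hltBC.le) fun _ hx ↦ hx
  have hincl : Function.Injective incl := by
    rw [← LinearMap.ker_eq_bot]
    exact (Submodule.ker_mapQ ..).trans (Submodule.mkQ_map_self _)
  have hrange : LinearMap.range incl = (B.comap C.subtype).map (A.comap C.subtype).mkQ :=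
    (Submodule.range_mapQ ..).trans (by rw [Submodule.range_inclusion])
  have hker : LinearMap.ker (Submodule.factor hle) =
      (B.comap C.subtype).map (A.comap C.subtype).mkQ := by
    rw [Submodule.ker_mapQ, Submodule.comap_id]
  have hrange' : LinearMap.range (incl ∘ₗ eAB.symm.toLinearMap) = LinearMap.range incl :=
    LinearMap.range_comp_of_range_eq_top _ eAB.symm.range
  obtain ⟨N, hN⟩ := h.exists_isCompl_range (f := incl ∘ₗ eAB.symm.toLinearMap)
    (g := eBC.toLinearMap ∘ₗ Submodule.factor hle)
    (hincl.comp eAB.symm.injective) (eBC.surjective.comp (Submodule.factor_surjective hle))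
    (by rw [hrange', hrange, LinearMap.ker_comp_of_ker_eq_bot _ eBC.ker, hker])
  exact exists_inf_eq_sup_eq_of_isCompl_map_mkQ hltAB.le hltBC.le (hrange ▸ hrange' ▸ hN)

theorem HasFactor.exists_exchange {D D' : Type u} [AddCommGroup D] [Module Λ D]
    [AddCommGroup D'] [Module Λ D'] {A B C : Submodule Λ M} (hAB : HasFactor D A B)
    (hBC : HasFactor D' B C) (h : EverySESSplits Λ D D') :
    ∃ N : Submodule Λ M, HasFactor D' A N ∧ HasFactor D N C := by
  obtain ⟨N, rfl, rfl⟩ := h.exists_inf_eq_sup_eq hAB hBC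
  rw [inf_comm] at hAB
  exact ⟨N, hasFactor_inf_left_iff.2 hBC, sup_comm B N ▸ hasFactor_inf_left_iff.1 hAB⟩

end Exchange

/-- The chain `F` is a `Δ`-filtration of `M` whose `i`-th factor is isomorphic to `Δ (w i)`.
Unlike in `IsDeltaFiltration`, the labels are data, so that rearranging the factors amounts to
permuting `w`. -/
structure IsLabelledFiltration {Λ : Type*} [Ring Λ] {Ω : Type*} (Δ : Ω → Type*)
    [∀ ω, AddCommGroup (Δ ω)] [∀ ω, Module Λ (Δ ω)] {M : Type*} [AddCommGroup M] [Module Λ M]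
    {t : ℕ} (F : Fin (t + 1) → Submodule Λ M) (w : Fin t → Ω) : Prop where
  zero_eq_bot : F 0 = ⊥
  last_eq_top : F (Fin.last t) = ⊤
  hasFactor : ∀ i, HasFactor (Δ (w i)) (F i.castSucc) (F i.succ)

section Rearrangement

variable {Λ : Type u} [Ring Λ] {Ω : Type v} {Δ : Ω → Type u} [∀ ω, AddCommGroup (Δ ω)]
  [∀ ω, Module Λ (Δ ω)] {M : Type u} [AddCommGroup M] [Module Λ M] {t : ℕ}
  {F : Fin (t + 1) → Submodule Λ M} {w : Fin t → Ω}

theorem isDeltaFiltration_iff_exists_isLabelledFiltration [Preorder Ω] [Fintype Ω] :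
    IsDeltaFiltration Λ Δ t F ↔ ∃ w : Fin t → Ω, IsLabelledFiltration Δ F w := by
  constructor
  · rintro ⟨hbot, htop, hmono, hfactor⟩
    choose w hw using hfactor
    exact ⟨w, hbot, htop, fun i ↦ ⟨hmono i.castSucc_lt_succ, hw i⟩⟩
  · rintro ⟨w, hbot, htop, hfactor⟩
    exact ⟨hbot, htop, Fin.strictMono_iff_lt_succ.2 fun i ↦ (hfactor i).1,
      fun i ↦ ⟨w i, (hfactor i).2⟩⟩

namespace IsLabelledFiltration

theorem nonempty_factor_equiv_iff (hF : IsLabelledFiltration Δ F w) (i : Fin t) (ω : Ω) :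
    Nonempty ((F i.succ ⧸ (F i.castSucc).comap (F i.succ).subtype) ≃ₗ[Λ] Δ ω) ↔
      Nonempty (Δ (w i) ≃ₗ[Λ] Δ ω) := by
  obtain ⟨-, ⟨e⟩⟩ := hF.hasFactor i
  exact ⟨fun ⟨f⟩ ↦ ⟨e.symm.trans f⟩, fun ⟨f⟩ ↦ ⟨e.trans f⟩⟩

theorem ellOmega_eq_card [Preorder Ω] [Fintype Ω] (hF : IsLabelledFiltration Δ F w) (ω : Ω) :
    ellOmega Λ Δ t F ω = Nat.card {i // Nonempty (Δ (w i) ≃ₗ[Λ] Δ ω)} := by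
  simp only [ellOmega, hF.nonempty_factor_equiv_iff]

theorem exists_comp_swap (hF : IsLabelledFiltration Δ F w) {i j : Fin t} (hij : i ⋖ j)
    (hsplit : EverySESSplits Λ (Δ (w i)) (Δ (w j))) :
    ∃ F' : Fin (t + 1) → Submodule Λ M, IsLabelledFiltration Δ F' (w ∘ Equiv.swap i j) := by
  have hsucc : i.succ = j.castSucc := Fin.ext (by simpa using hij)
  obtain ⟨N, hN, hN'⟩ :=
    (hF.hasFactor i).exists_exchange (hsucc ▸ hF.hasFactor j) hsplit
  refine ⟨Function.update F i.succ N, ?_, ?_, forall_fin_step_update_succ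
    (r := fun ω A B ↦ HasFactor (Δ ω) A B) hF.hasFactor hsucc hN hN'⟩
  · rw [Function.update_of_ne i.succ_ne_zero.symm, hF.zero_eq_bot]
  · rw [Function.update_of_ne (hsucc ▸ j.castSucc_lt_last.ne'), hF.last_eq_top]

theorem exists_perm_antitone {α : Type*} [LinearOrder α] {h : Ω → α}
    (hsplit : ∀ ω ω', h ω < h ω' → EverySESSplits Λ (Δ ω) (Δ ω'))
    (hF : IsLabelledFiltration Δ F w) :
    ∃ (σ : Equiv.Perm (Fin t)) (F' : Fin (t + 1) → Submodule Λ M),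
      IsLabelledFiltration Δ F' (w ∘ σ) ∧ Antitone (h ∘ w ∘ σ) := by
  obtain ⟨σ, ⟨F', hF'⟩, hanti⟩ := exists_perm_antitone_of_covBy_swap h
    (P := fun w ↦ ∃ F : Fin (t + 1) → Submodule Λ M, IsLabelledFiltration Δ F w) ⟨F, hF⟩
    fun _ _ _ hij hlt ⟨_, hG⟩ ↦ hG.exists_comp_swap hij (hsplit _ _ hlt)
  exact ⟨σ, F', hF', hanti⟩

end IsLabelledFiltration

end Rearrangement

theorem heightFun_mono {Ω : Type v} [Preorder Ω] [Fintype Ω] :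
    Monotone (heightFun : Ω → ℕ) := by
  intro a b hab
  have hfin : Order.height b ≠ ⊤ := fun htop ↦ by
    obtain ⟨p, -, hp⟩ := Order.height_eq_top_iff.1 htop (Fintype.card Ω)
    exact p.length_lt_card.ne hp
  simp only [heightFun, ← Order.height_eq_iSup_last_eq]
  exact Nat.add_le_add_left (ENat.toNat_le_toNat (Order.height_mono hab) hfin) 1

theorem IsHomologicalSystem.everySESSplits_of_heightFun_lt {Λ : Type u} [Ring Λ] {Ω : Type v}
    [Preorder Ω] [Fintype Ω] {Δ : Ω → Type u} [∀ ω, AddCommGroup (Δ ω)] [∀ ω, Module Λ (Δ ω)]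
    (hs : IsHomologicalSystem Λ Δ) {ω ω' : Ω} (hlt : heightFun ω < heightFun ω') :
    EverySESSplits Λ (Δ ω) (Δ ω') :=
  hs.hs4 ω' ω fun hle ↦ hlt.not_ge (heightFun_mono hle.1)

theorem exists_deltaFiltration_height_decreasing_general
    {Λ : Type u} [Ring Λ] {Ω : Type v} [Preorder Ω] [Fintype Ω]
    (Δ : Ω → Type u) [∀ ω, AddCommGroup (Δ ω)] [∀ ω, Module Λ (Δ ω)]
    {α : Type*} [LinearOrder α] (h : Ω → α)
    (hiso : ∀ ω ω', Nonempty (Δ ω ≃ₗ[Λ] Δ ω') → h ω = h ω')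
    (hsplit : ∀ ω ω', h ω < h ω' → EverySESSplits Λ (Δ ω) (Δ ω'))
    (M : Type u) [AddCommGroup M] [Module Λ M]
    (t : ℕ) (F : Fin (t + 1) → Submodule Λ M) (hF : IsDeltaFiltration Λ Δ t F) :
    ∃ F' : Fin (t + 1) → Submodule Λ M, IsDeltaFiltration Λ Δ t F' ∧
      (∀ ω : Ω, ellOmega Λ Δ t F ω = ellOmega Λ Δ t F' ω) ∧
      ∀ i j : Fin t, i ≤ j → ∀ ω ω' : Ω,
        Nonempty ((F' i.succ ⧸ (F' i.castSucc).comap (F' i.succ).subtype) ≃ₗ[Λ] Δ ω) →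
        Nonempty ((F' j.succ ⧸ (F' j.castSucc).comap (F' j.succ).subtype) ≃ₗ[Λ] Δ ω') →
        h ω' ≤ h ω := by
  obtain ⟨w, hw⟩ := isDeltaFiltration_iff_exists_isLabelledFiltration.1 hF
  obtain ⟨σ, F', hF', hanti⟩ := hw.exists_perm_antitone hsplit
  refine ⟨F', isDeltaFiltration_iff_exists_isLabelledFiltration.2 ⟨_, hF'⟩, fun ω ↦ ?_,
    fun i j hij ω ω' hi hj ↦ ?_⟩
  · rw [hw.ellOmega_eq_card, hF'.ellOmega_eq_card]
    exact (Nat.card_congr (σ.subtypeEquiv fun _ ↦ Iff.rfl)).symm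
  · rw [hF'.nonempty_factor_equiv_iff] at hi hj
    rw [← hiso _ _ hi, ← hiso _ _ hj]
    exact hanti hij

/-- Proposition 6 (arrangement): any `Δ`-filtration of a nonzero `M ∈ 𝔉(Δ)` can be rearranged
into a `Δ`-filtration with the same multiplicities `ℓ_ω` whose factors have weakly decreasing
heights along the filtration. -/
theorem exists_deltaFiltration_height_decreasing
    {R : Type u} [CommRing R] [IsArtinianRing R]
    {Λ : Type u} [Ring Λ] [Algebra R Λ] [Module.Finite R Λ]
    {Ω : Type v} [Preorder Ω] [Fintype Ω] [Nonempty Ω]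
    (Δ : Ω → Type u) [∀ ω, AddCommGroup (Δ ω)] [∀ ω, Module Λ (Δ ω)]
    (hs : IsHomologicalSystem Λ Δ)
    (M : Type u) [AddCommGroup M] [Module Λ M] [Module.Finite Λ M] (hM : Nontrivial M)
    (t : ℕ) (F : Fin (t + 1) → Submodule Λ M) (hF : IsDeltaFiltration Λ Δ t F) :
    ∃ F' : Fin (t + 1) → Submodule Λ M, IsDeltaFiltration Λ Δ t F' ∧
      (∀ ω : Ω, ellOmega Λ Δ t F ω = ellOmega Λ Δ t F' ω) ∧
      ∀ i j : Fin t, i ≤ j → ∀ ω ω' : Ω,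
        Nonempty ((F' i.succ ⧸ (F' i.castSucc).comap (F' i.succ).subtype) ≃ₗ[Λ] Δ ω) →
        Nonempty ((F' j.succ ⧸ (F' j.castSucc).comap (F' j.succ).subtype) ≃ₗ[Λ] Δ ω') →
        heightFun ω' ≤ heightFun ω := by
  exact exists_deltaFiltration_height_decreasing_general Δ heightFun
    (fun ω ω' ⟨e⟩ ↦ by_contra fun hne ↦
      (hs.pairwise_nonIso ω ω' fun hω ↦ hne (congrArg heightFun hω)).false e)
    (fun _ _ ↦ hs.everySESSplits_of_heightFun_lt) M t F hF
end

section
/- Let (Δ; Ω, ≤) be a homological system over an Artin algebra Λ with height function h, and let {1, 2, …, a} be the image of h. If M ∈ F(Δ), then there exists a filtration {0} = W_{a+1} ⊆ W_a ⊆ ⋯ ⊆ W_1 = M of submodules such that for each i ∈ {1,…,a}, the quotient W_i/W_{i+1} is isomorphic to a finite direct sum ⨁_{ω: h(ω)=i} n_ω Δ_ω of copies of the modules Δ_ω with h(ω) = i, where n_ω are nonnegative integers (such a filtration is called an h-filtration). -/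
universe u v

open DirectSum

/-!
A `Δ`-filtration is sorted by insertion: its factors are added one at a time to an `h`-filtration.
Suppose `N` carries an `h`-filtration with top layer `L = N / N₁` of height `i`, and
`N' / N ≅ Δ ω` with `i ≤ h ω`. The summands `Δ ω'` of `L` satisfy `h ω' ≤ h ω`, which rules out
`ω < ω'`, so `Ext¹ (Δ ω, L) = 0` and `N' / N₁ ≅ Δ ω × L`. If `h ω = i`, the new factor joins the
top layer; otherwise `N'` has a submodule `X` with `N' / X ≅ L` and `X / N₁ ≅ Δ ω`, and the
insertion continues below, in the `h`-filtration of `N₁`.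
-/

lemma height_lt_top_of_finite {α : Type*} [Preorder α] [Finite α] (x : α) :
    Order.height x < ⊤ := by
  have := Fintype.ofFinite α
  exact (Order.height_le fun p _ => Nat.cast_le.2 p.length_lt_card.le).trans_lt
    (ENat.natCast_lt_top (Fintype.card α))

section Height

variable {Ω : Type v} [Preorder Ω] [Fintype Ω]

lemma natCast_heightFun (ω : Ω) : (heightFun ω : ℕ∞) = 1 + Order.height ω := by
  rw [heightFun, ← Order.height_eq_iSup_last_eq, Nat.cast_add, Nat.cast_one,
    ENat.natCast_toNat (height_lt_top_of_finite ω).ne]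

lemma heightFun_strictMono : StrictMono (heightFun : Ω → ℕ) := by
  intro ω ω' hlt
  rw [← ENat.natCast_lt_natCast, natCast_heightFun, natCast_heightFun,
    ENat.add_lt_add_iff_left ENat.one_ne_top]
  exact Order.height_strictMono hlt (height_lt_top_of_finite ω)

lemma one_le_heightFun (ω : Ω) : 1 ≤ heightFun ω :=
  Nat.le_add_right 1 _

end Height

section Pushout

variable {Λ A B C E : Type*} [Ring Λ] [AddCommGroup A] [Module Λ A] [AddCommGroup B] [Module Λ B]
  [AddCommGroup C] [Module Λ C] [AddCommGroup E] [Module Λ E]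

/-- The pushout of `φ : A → C` and `f : A → E`, as a quotient of `C × E`. It turns an extension
of `B` by `A` into an extension of `B` by `C`. -/
abbrev LinearPushout (φ : A →ₗ[Λ] C) (f : A →ₗ[Λ] E) : Type _ :=
  (C × E) ⧸ LinearMap.range (φ.prod (-f))

namespace LinearPushout

variable (φ : A →ₗ[Λ] C) (f : A →ₗ[Λ] E)

/-- The structure map from `C` to the pushout of `φ : A → C` and `f : A → E`. -/
def inl : C →ₗ[Λ] LinearPushout φ f := Submodule.mkQ _ ∘ₗ LinearMap.inl Λ C E

/-- The structure map from `E` to the pushout of `φ : A → C` and `f : A → E`. -/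
def inr : E →ₗ[Λ] LinearPushout φ f := Submodule.mkQ _ ∘ₗ LinearMap.inr Λ C E

/-- The map from the pushout induced by `0 : C → B` and a map `g : E → B` with `g ∘ f = 0`. -/
def descRight (g : E →ₗ[Λ] B) (hgf : g ∘ₗ f = 0) : LinearPushout φ f →ₗ[Λ] B :=
  (LinearMap.range (φ.prod (-f))).liftQ (g ∘ₗ LinearMap.snd Λ C E) <| by
    rw [LinearMap.range_le_ker_iff, LinearMap.comp_assoc, LinearMap.snd_prod, LinearMap.comp_neg,
      hgf, neg_zero]

variable {φ f}

lemma exists_eq_inl_add_inr (x : LinearPushout φ f) : ∃ c e, x = inl φ f c + inr φ f e := by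
  obtain ⟨⟨c, e⟩, rfl⟩ := Submodule.mkQ_surjective _ x
  exact ⟨c, e, by simp [inl, inr, ← Submodule.Quotient.mk_add]⟩

lemma inr_apply_apply (a : A) : inr φ f (f a) = inl φ f (φ a) :=
  (Submodule.Quotient.eq _).2 ⟨-a, by simp⟩

lemma inl_injective (hf : Function.Injective f) : Function.Injective (inl φ f) := by
  refine (injective_iff_map_eq_zero _).2 fun c hc => ?_
  obtain ⟨a, ha⟩ := (Submodule.Quotient.mk_eq_zero _).1 hc
  have hfa : f a = 0 := neg_eq_zero.1 (congrArg Prod.snd ha)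
  have hφa : φ a = c := congrArg Prod.fst ha
  rw [← hφa, (map_eq_zero_iff f hf).1 hfa, map_zero]

variable {g : E →ₗ[Λ] B} {hgf : g ∘ₗ f = 0}

@[simp]
lemma descRight_inl (c : C) : descRight φ f g hgf (inl φ f c) = 0 := by
  simp [descRight, inl]

@[simp]
lemma descRight_inr (e : E) : descRight φ f g hgf (inr φ f e) = g e := by
  simp [descRight, inr]

lemma descRight_surjective (hg : Function.Surjective g) :
    Function.Surjective (descRight φ f g hgf) :=
  fun b => (hg b).imp' (inr φ f) fun e he => by rw [descRight_inr, he]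

lemma exact_inl_descRight (hfg : Function.Exact f g) :
    Function.Exact (inl φ f) (descRight φ f g hgf) := by
  refine fun x => ⟨fun hx => ?_, ?_⟩
  · obtain ⟨c, e, rfl⟩ := exists_eq_inl_add_inr x
    rw [map_add, descRight_inl, descRight_inr, zero_add] at hx
    obtain ⟨a, rfl⟩ := (hfg e).1 hx
    exact ⟨c + φ a, by rw [map_add, inr_apply_apply]⟩
  · rintro ⟨c, rfl⟩
    exact descRight_inl c

end LinearPushout

end Pushout

namespace EverySESSplits

variable {Λ B C E : Type u} [Ring Λ] [AddCommGroup B] [Module Λ B] [AddCommGroup C] [Module Λ C]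
  [AddCommGroup E] [Module Λ E]

lemma exists_retraction (hsplit : EverySESSplits Λ C B) {f : C →ₗ[Λ] E} {g : E →ₗ[Λ] B}
    (hf : Function.Injective f) (hg : Function.Surjective g) (hfg : Function.Exact f g) :
    ∃ r : E →ₗ[Λ] C, r ∘ₗ f = LinearMap.id :=
  ((hfg.split_tfae hf hg).out 0 1 rfl rfl).1 <|
    hsplit E f g hf hg (LinearMap.exact_iff.1 hfg).symm

lemma exists_extension {A : Type*} [AddCommGroup A] [Module Λ A] (hsplit : EverySESSplits Λ C B)
    {f : A →ₗ[Λ] E} {g : E →ₗ[Λ] B} (hf : Function.Injective f) (hg : Function.Surjective g)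
    (hfg : Function.Exact f g) (φ : A →ₗ[Λ] C) : ∃ ψ : E →ₗ[Λ] C, ψ ∘ₗ f = φ := by
  obtain ⟨r, hr⟩ := hsplit.exists_retraction (LinearPushout.inl_injective (φ := φ) hf)
    (LinearPushout.descRight_surjective (hgf := hfg.linearMap_comp_eq_zero) hg)
    (LinearPushout.exact_inl_descRight hfg)
  refine ⟨r ∘ₗ LinearPushout.inr φ f, LinearMap.ext fun a => ?_⟩
  rw [LinearMap.comp_apply, LinearMap.comp_apply, LinearPushout.inr_apply_apply]
  exact LinearMap.congr_fun hr (φ a)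

end EverySESSplits

section Subquotient

variable {Λ M A B L L' : Type*} [Ring Λ] [AddCommGroup M] [Module Λ M] [AddCommGroup A]
  [Module Λ A] [AddCommGroup B] [Module Λ B] [AddCommGroup L] [Module Λ L] [AddCommGroup L']
  [Module Λ L'] {N N' N₁ N₂ N₃ : Submodule Λ M}

/-- `N' ≤ N` and `N / N' ≅ L`; the isomorphism is encoded by a surjection `N → L` with
kernel `N'`, see `isSubquotient_iff`. -/
def IsSubquotient (N' N : Submodule Λ M) (L : Type*) [AddCommGroup L] [Module Λ L] : Prop :=
  N' ≤ N ∧ ∃ φ : N →ₗ[Λ] L, Function.Surjective φ ∧ ∀ x : N, φ x = 0 ↔ (x : M) ∈ N'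

lemma isSubquotient_iff :
    IsSubquotient N' N L ↔ N' ≤ N ∧ Nonempty ((N ⧸ N'.comap N.subtype) ≃ₗ[Λ] L) := by
  refine and_congr_right fun _ => ⟨?_, ?_⟩
  · rintro ⟨φ, hφ, hker⟩
    have hcomap : N'.comap N.subtype = LinearMap.ker φ := Submodule.ext fun x => (hker x).symm
    exact ⟨Submodule.quotEquivOfEq _ _ hcomap ≪≫ₗ φ.quotKerEquivOfSurjective hφ⟩
  · rintro ⟨e⟩
    exact ⟨e.toLinearMap ∘ₗ Submodule.mkQ _, e.surjective.comp (Submodule.mkQ_surjective _),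
      fun x => by simp⟩

namespace IsSubquotient

lemma congr (h : IsSubquotient N' N L) (e : L ≃ₗ[Λ] L') : IsSubquotient N' N L' := by
  obtain ⟨hle, φ, hφ, hker⟩ := h
  exact ⟨hle, e.toLinearMap ∘ₗ φ, e.surjective.comp hφ, fun x => by simp [← hker]⟩

lemma of_subsingleton [Subsingleton L] (N : Submodule Λ M) : IsSubquotient N N L :=
  ⟨le_rfl, 0, Function.surjective_to_subsingleton _, fun x => by simp⟩

lemma prod_of_forall_exists_extension (hA : IsSubquotient N₁ N₂ A) (hB : IsSubquotient N₂ N₃ B)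
    (hext : ∀ φ : N₂ →ₗ[Λ] A, ∃ ψ : N₃ →ₗ[Λ] A, ψ ∘ₗ Submodule.inclusion hB.1 = φ) :
    IsSubquotient N₁ N₃ (B × A) := by
  obtain ⟨h₁₂, φ, hφ, hkerφ⟩ := hA
  obtain ⟨h₂₃, g, hg, hkerg⟩ := hB
  obtain ⟨ψ, rfl⟩ := hext φ
  refine ⟨h₁₂.trans h₂₃, g.prod ψ, ?_, fun x => ?_⟩
  · rintro ⟨b, a⟩
    obtain ⟨x, rfl⟩ := hg b
    obtain ⟨y, hy⟩ := hφ (a - ψ x)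
    have hgy : g (Submodule.inclusion h₂₃ y) = 0 := (hkerg _).2 y.2
    refine ⟨x + Submodule.inclusion h₂₃ y, Prod.ext ?_ ?_⟩
    · simp [hgy]
    · simpa using eq_sub_iff_add_eq'.1 hy
  · have hzero : g.prod ψ x = 0 ↔ (x : M) ∈ N₂ ∧ ψ x = 0 := by rw [← hkerg]; exact Prod.ext_iff
    exact hzero.trans ⟨fun ⟨hx, hψ⟩ => (hkerφ ⟨x, hx⟩).1 hψ,
      fun hx => ⟨h₁₂ hx, (hkerφ ⟨x, h₁₂ hx⟩).2 hx⟩⟩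

lemma exists_between (h : IsSubquotient N₁ N₂ (A × B)) :
    ∃ N, IsSubquotient N₁ N A ∧ IsSubquotient N N₂ B := by
  obtain ⟨hle, χ, hχ, hker⟩ := h
  let N : Submodule Λ M := (LinearMap.ker (LinearMap.snd Λ A B ∘ₗ χ)).map N₂.subtype
  have hN : N ≤ N₂ := Submodule.map_subtype_le _ _
  have mem_N (x : N₂) : (x : M) ∈ N ↔ (χ x).2 = 0 := by simp [N]
  have hker' (x : N₂) : (x : M) ∈ N₁ ↔ (χ x).1 = 0 ∧ (χ x).2 = 0 := by
    rw [← hker, Prod.ext_iff, Prod.fst_zero, Prod.snd_zero]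
  refine ⟨N, ⟨fun x hx => (mem_N ⟨x, hle hx⟩).2 ((hker' _).1 hx).2,
    LinearMap.fst Λ A B ∘ₗ χ ∘ₗ Submodule.inclusion hN, fun a => ?_, fun x => ?_⟩,
    ⟨hN, LinearMap.snd Λ A B ∘ₗ χ, Prod.snd_surjective.comp hχ, fun x => (mem_N x).symm⟩⟩
  · obtain ⟨x, hx⟩ := hχ (a, 0)
    exact ⟨⟨x, (mem_N x).2 (congrArg Prod.snd hx)⟩, congrArg Prod.fst hx⟩
  · exact ((hker' (Submodule.inclusion hN x)).trans
      (and_iff_left ((mem_N (Submodule.inclusion hN x)).1 x.2))).symm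

end IsSubquotient

end Subquotient

lemma IsSubquotient.prod_pi_of_everySESSplits {Λ M B : Type u} [Ring Λ] [AddCommGroup M]
    [Module Λ M] [AddCommGroup B] [Module Λ B] {J : Type*} {A : J → Type u}
    [∀ j, AddCommGroup (A j)] [∀ j, Module Λ (A j)] {N₁ N₂ N₃ : Submodule Λ M}
    (hA : IsSubquotient N₁ N₂ (∀ j, A j)) (hB : IsSubquotient N₂ N₃ B)
    (hsplit : ∀ j, EverySESSplits Λ (A j) B) : IsSubquotient N₁ N₃ (B × ∀ j, A j) := by
  refine hA.prod_of_forall_exists_extension hB fun φ => ?_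
  obtain ⟨h₂₃, g, hg, hker⟩ := hB
  have hexact : Function.Exact (Submodule.inclusion h₂₃) g := fun x =>
    (hker x).trans ⟨fun hx => ⟨⟨x, hx⟩, rfl⟩, by rintro ⟨y, rfl⟩; exact y.2⟩
  choose ψ hψ using fun j => (hsplit j).exists_extension (Submodule.inclusion_injective h₂₃) hg
    hexact (LinearMap.proj j ∘ₗ φ)
  exact ⟨LinearMap.pi ψ, LinearMap.ext fun x => funext fun j => LinearMap.congr_fun (hψ j) x⟩

section Layer

/-- Collects the equal factors of `∏ j, A (c j)`: the factor `A i` occurs once for each point of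
the fibre of `c` over `i`. -/
noncomputable def piFiberEquiv (Λ : Type*) [Ring Λ] {ι J : Type*} [Finite J] (c : J → ι)
    (A : ι → Type*) [∀ i, AddCommGroup (A i)] [∀ i, Module Λ (A i)] :
    (∀ j, A (c j)) ≃ₗ[Λ] ∀ i, Fin (Nat.card {j // c j = i}) → A i :=
  let fiberIndex : (Σ i, Fin (Nat.card {j // c j = i})) ≃ J :=
    (Equiv.sigmaCongrRight fun _ => (Finite.equivFin _).symm).trans (Equiv.sigmaFiberEquiv c)
  (LinearEquiv.piCongrLeft' Λ (fun p : Σ i, Fin (Nat.card {j // c j = i}) => A p.1)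
    fiberIndex).symm ≪≫ₗ LinearEquiv.piCurry Λ fun i _ => A i

variable {Λ M : Type*} [Ring Λ] [AddCommGroup M] [Module Λ M] {Ω : Type*} (h : Ω → ℕ)
  (Δ : Ω → Type*) [∀ ω, AddCommGroup (Δ ω)] [∀ ω, Module Λ (Δ ω)] {i b : ℕ}
  {N N' : Submodule Λ M}

/-- `N / N'` is a finite direct sum of modules `Δ ω` with `h ω = i`. The summands are listed by a
finite sequence instead of being counted, so that adjoining one is `Fin.cons`. -/
def IsLayer (i : ℕ) (N' N : Submodule Λ M) : Prop :=
  ∃ (k : ℕ) (c : Fin k → {ω // h ω = i}), IsSubquotient N' N (∀ j, Δ (c j))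

/-- `N` has a filtration `⊥ = W b ≤ ⋯ ≤ W i = N` whose layers `W j / W (j + 1)` are finite direct
sums of modules `Δ ω` with `h ω = j`. -/
def HasLayerFiltration (i b : ℕ) (N : Submodule Λ M) : Prop :=
  ∃ W : ℕ → Submodule Λ M, W i = N ∧ W b = ⊥ ∧ ∀ j ∈ Set.Ico i b, IsLayer h Δ j (W (j + 1)) (W j)

variable {h Δ}

lemma IsLayer.refl (N : Submodule Λ M) : IsLayer h Δ i N N :=
  ⟨0, Fin.elim0, .of_subsingleton N⟩

lemma IsLayer.exists_multiplicity (hN : IsLayer h Δ i N' N) :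
    ∃ n : {ω // h ω = i} → ℕ, IsSubquotient N' N (∀ ω, Fin (n ω) → Δ ω) := by
  obtain ⟨k, c, hc⟩ := hN
  exact ⟨_, hc.congr (piFiberEquiv Λ c fun ω => Δ ω)⟩

lemma hasLayerFiltration_bot (i b : ℕ) : HasLayerFiltration h Δ i b (⊥ : Submodule Λ M) :=
  ⟨fun _ => ⊥, rfl, rfl, fun _ _ => .refl ⊥⟩

lemma hasLayerFiltration_iff_of_lt (hib : i < b) :
    HasLayerFiltration h Δ i b N ↔
      ∃ N₁, IsLayer h Δ i N₁ N ∧ HasLayerFiltration h Δ (i + 1) b N₁ := by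
  constructor
  · rintro ⟨W, rfl, hb, hW⟩
    exact ⟨W (i + 1), hW i ⟨le_rfl, hib⟩, W, rfl, hb,
      fun j hj => hW j ⟨Nat.le_of_succ_le hj.1, hj.2⟩⟩
  · rintro ⟨N₁, hN₁, W, rfl, hb, hW⟩
    refine ⟨Function.update W i N, by simp, by simp [hib.ne', hb], fun j hj => ?_⟩
    obtain rfl | hij := hj.1.eq_or_lt
    · simpa using hN₁
    · simpa [hij.ne', (hij.trans j.lt_succ_self).ne'] using hW j ⟨hij, hj.2⟩

end Layer

section Insertion

variable {Λ M : Type u} [Ring Λ] [AddCommGroup M] [Module Λ M] {Ω : Type*} {h : Ω → ℕ}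
  {Δ : Ω → Type u} [∀ ω, AddCommGroup (Δ ω)] [∀ ω, Module Λ (Δ ω)] {i b : ℕ} {ω : Ω}
  {N N' N₁ : Submodule Λ M}

lemma IsLayer.insert (hN : IsLayer h Δ i N₁ N) (hN' : IsSubquotient N N' (Δ ω)) (hω : h ω = i)
    (hsplit : ∀ ω', h ω' = i → EverySESSplits Λ (Δ ω') (Δ ω)) : IsLayer h Δ i N₁ N' := by
  obtain ⟨k, c, hc⟩ := hN
  let c' : Fin (k + 1) → {ω // h ω = i} := Fin.cons ⟨ω, hω⟩ c
  exact ⟨k + 1, c', (hc.prod_pi_of_everySESSplits hN' fun j => hsplit _ (c j).2).congr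
    (Fin.consLinearEquiv Λ fun j => Δ (c' j))⟩

lemma IsLayer.exchange (hN : IsLayer h Δ i N₁ N) (hN' : IsSubquotient N N' (Δ ω))
    (hsplit : ∀ ω', h ω' = i → EverySESSplits Λ (Δ ω') (Δ ω)) :
    ∃ X, IsSubquotient N₁ X (Δ ω) ∧ IsLayer h Δ i X N' := by
  obtain ⟨k, c, hc⟩ := hN
  obtain ⟨X, hX, hXN'⟩ :=
    (hc.prod_pi_of_everySESSplits hN' fun j => hsplit _ (c j).2).exists_between
  exact ⟨X, hX, k, c, hXN'⟩

lemma HasLayerFiltration.insert (hsplit : ∀ ω', h ω' ≤ h ω → EverySESSplits Λ (Δ ω') (Δ ω))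
    (hN : HasLayerFiltration h Δ i b N) (hN' : IsSubquotient N N' (Δ ω)) (hi : i ≤ h ω)
    (hb : h ω < b) : HasLayerFiltration h Δ i b N' := by
  have hib : i ≤ b := (hi.trans_lt hb).le
  induction hib using Nat.decreasingInduction generalizing N N' with
  | self => exact absurd hb hi.not_gt
  | of_succ i hib ih =>
    obtain ⟨N₁, hlayer, hN₁⟩ := (hasLayerFiltration_iff_of_lt hib).1 hN
    have hsplit_i (ω' : Ω) (hω' : h ω' = i) : EverySESSplits Λ (Δ ω') (Δ ω) :=
      hsplit ω' (hω'.trans_le hi)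
    rw [hasLayerFiltration_iff_of_lt hib]
    obtain hω | hlt := hi.eq_or_lt
    · exact ⟨N₁, hlayer.insert hN' hω.symm hsplit_i, hN₁⟩
    · obtain ⟨X, hX, hXN'⟩ := hlayer.exchange hN' hsplit_i
      exact ⟨X, hXN', ih hN₁ hX hlt⟩

end Insertion

section HFiltration

variable {Λ M : Type u} [Ring Λ] [AddCommGroup M] [Module Λ M] {Ω : Type v} [Preorder Ω]
  [Fintype Ω] {Δ : Ω → Type u} [∀ ω, AddCommGroup (Δ ω)] [∀ ω, Module Λ (Δ ω)]

lemma IsDeltaFiltration.hasLayerFiltration {t : ℕ} {F : Fin (t + 1) → Submodule Λ M}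
    (hF : IsDeltaFiltration Λ Δ t F) {h : Ω → ℕ} {i b : ℕ}
    (hsplit : ∀ ω ω', h ω' ≤ h ω → EverySESSplits Λ (Δ ω') (Δ ω))
    (hrange : ∀ ω, h ω ∈ Set.Ico i b) : HasLayerFiltration h Δ i b (⊤ : Submodule Λ M) := by
  obtain ⟨hbot, htop, hmono, hfactor⟩ := hF
  rw [← htop]
  induction Fin.last t using Fin.induction with
  | zero => exact hbot ▸ hasLayerFiltration_bot i b
  | succ k ih =>
    obtain ⟨ω, hω⟩ := hfactor k
    exact ih.insert (hsplit ω)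
      (isSubquotient_iff.2 ⟨hmono.monotone k.castSucc_le_succ, hω⟩) (hrange ω).1 (hrange ω).2

lemma HasLayerFiltration.exists_isHFiltration {a : ℕ}
    (hM : HasLayerFiltration heightFun Δ 1 (a + 1) (⊤ : Submodule Λ M)) :
    ∃ (W : ℕ → Submodule Λ M) (n : Ω → ℕ), IsHFiltration Λ Δ a W n := by
  obtain ⟨W, htop, hbot, hlayer⟩ := hM
  choose! n hn using fun j hj => (hlayer j hj).exists_multiplicity
  refine ⟨W, fun ω => n (heightFun ω) ⟨ω, rfl⟩, hbot, htop,
    fun i hi hia => (hn i ⟨hi, Nat.lt_succ_of_le hia⟩).1, fun i hi hia => ?_⟩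
  have hni : n i = fun ω => n (heightFun ω.1) ⟨ω.1, rfl⟩ := funext fun ⟨ω, hω⟩ => by subst hω; rfl
  have hW := hn i ⟨hi, Nat.lt_succ_of_le hia⟩
  rw [hni] at hW
  exact (isSubquotient_iff.1 (hW.congr (DirectSum.linearEquivFunOnFintype Λ _ _).symm)).2

end HFiltration

theorem exists_hFiltration_general {Λ : Type u} [Ring Λ] {Ω : Type v} [Preorder Ω] [Fintype Ω]
    (Δ : Ω → Type u) [∀ ω, AddCommGroup (Δ ω)] [∀ ω, Module Λ (Δ ω)]
    (hsplit : ∀ ω ω', heightFun ω' ≤ heightFun ω → EverySESSplits Λ (Δ ω') (Δ ω))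
    (a : ℕ) (ha : ∀ ω : Ω, heightFun ω ≤ a)
    (M : Type u) [AddCommGroup M] [Module Λ M] (hM : MemFiltCat Λ Δ M) :
    ∃ (W : ℕ → Submodule Λ M) (n : Ω → ℕ), IsHFiltration Λ Δ a W n := by
  obtain ⟨t, F, hF⟩ := hM
  exact (hF.hasLayerFiltration hsplit fun ω =>
    ⟨one_le_heightFun ω, Nat.lt_succ_of_le (ha ω)⟩).exists_isHFiltration

/-- Proposition 8, existence: if `{1, …, a}` is the image of the height function `h` and
`M ∈ 𝔉(Δ)`, then `M` admits an `h`-filtration `0 = W (a+1) ⊆ W a ⊆ ⋯ ⊆ W 1 = M` whose layer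
`W i / W (i+1)` is a direct sum of copies of the `Δ ω` with `h ω = i`. -/
theorem exists_hFiltration
    {R : Type u} [CommRing R] [IsArtinianRing R]
    {Λ : Type u} [Ring Λ] [Algebra R Λ] [Module.Finite R Λ]
    {Ω : Type v} [Preorder Ω] [Fintype Ω] [Nonempty Ω]
    (Δ : Ω → Type u) [∀ ω, AddCommGroup (Δ ω)] [∀ ω, Module Λ (Δ ω)]
    (hs : IsHomologicalSystem Λ Δ)
    (a : ℕ) (hIm : Set.range (fun ω : Ω => heightFun ω) = Set.Icc 1 a)
    (M : Type u) [AddCommGroup M] [Module Λ M] [Module.Finite Λ M]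
    (hM : MemFiltCat Λ Δ M) :
    ∃ (W : ℕ → Submodule Λ M) (n : Ω → ℕ), IsHFiltration Λ Δ a W n :=
  exists_hFiltration_general Δ
    (fun ω ω' hle => hs.hs4 ω ω' fun hlt =>
      (heightFun_strictMono (lt_iff_le_not_ge.2 hlt)).not_ge hle)
    a (fun ω => (hIm.subset (Set.mem_range_self ω)).2) M hM
end

section
/- Let (Δ; Ω, ≤) be a homological system over an Artin algebra Λ with height function h, let {1, 2, …, a} be the image of h, let M ∈ F(Δ), and let {0} = W_{a+1} ⊆ W_a ⊆ ⋯ ⊆ W_1 = M and {0} = W'_{a+1} ⊆ W'_a ⊆ ⋯ ⊆ W'_1 = M be two h-filtrations of M. Then W_a = W'_a; that is, the bottom layer of an h-filtration is uniquely determined by M, being equal to the trace tr_{W_a}(M) of W_a in M. -/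
universe u v

open DirectSum

/-!
By (HS3) there are no nonzero maps from a `Δ ω` of greater height to one of smaller height. The
bottom layer `L` of an `h`-filtration `W'` is a sum of `Δ ω` of maximal height, so every map from
`L` into a module with an `h`-filtration `W` of the same length `a` vanishes on the quotients
`W 1 / W 2`, `W 2 / W 3`, …, `W (a - 1) / W a` in turn, hence has image in `W a`. In other words
`tr_L(M) ≤ W a`. As a submodule is contained in its own trace, applying this to each pair
chosen from two filtrations of `M` gives both equalities.
-/

theorem order_height_ne_top {α : Type*} [Preorder α] [Finite α] (x : α) :
    Order.height x ≠ ⊤ := by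
  have := Fintype.ofFinite α
  have height_le_card : Order.height x ≤ (Fintype.card α : ℕ∞) := by
    rw [Order.height_eq_iSup_last_eq]
    exact iSup₂_le fun p _ => Nat.cast_le.2 p.length_lt_card.le
  exact ne_top_of_le_ne_top (ENat.natCast_ne_top _) height_le_card

theorem heightFun_eq_one_add_height {Ω : Type*} [Preorder Ω] [Fintype Ω] (ω : Ω) :
    heightFun ω = 1 + (Order.height ω).toNat := by
  rw [heightFun, Order.height_eq_iSup_last_eq]

theorem heightFun_monotone {Ω : Type*} [Preorder Ω] [Fintype Ω] :
    Monotone (heightFun : Ω → ℕ) := by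
  intro ω ω' h
  rw [heightFun_eq_one_add_height, heightFun_eq_one_add_height]
  exact Nat.add_le_add_left
    (ENat.toNat_le_toNat (Order.height_mono h) (order_height_ne_top ω')) 1

section LinearMap

variable {Λ : Type*} [Semiring Λ] {ι : Type*} {N : ι → Type*} [∀ i, AddCommMonoid (N i)]
  [∀ i, Module Λ (N i)] {L : Type*} [AddCommMonoid L] [Module Λ L]

instance subsingletonLinearMapFromPi [Finite ι] [∀ i, Subsingleton (N i →ₗ[Λ] L)] :
    Subsingleton ((∀ i, N i) →ₗ[Λ] L) := by
  classical exact ⟨fun _ _ => LinearMap.pi_ext' fun _ => Subsingleton.elim _ _⟩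

instance subsingletonLinearMapToPi [∀ i, Subsingleton (L →ₗ[Λ] N i)] :
    Subsingleton (L →ₗ[Λ] ∀ i, N i) :=
  ⟨fun f g => LinearMap.ext fun x => funext fun i =>
    LinearMap.congr_fun (Subsingleton.elim (LinearMap.proj i ∘ₗ f) (LinearMap.proj i ∘ₗ g)) x⟩

instance subsingletonLinearMapFromDirectSum [∀ i, Subsingleton (N i →ₗ[Λ] L)] :
    Subsingleton ((⨁ i, N i) →ₗ[Λ] L) := by
  classical exact ⟨fun _ _ => DirectSum.linearMap_ext Λ fun _ => Subsingleton.elim _ _⟩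

instance subsingletonLinearMapToDirectSum [∀ i, Subsingleton (L →ₗ[Λ] N i)] :
    Subsingleton (L →ₗ[Λ] ⨁ i, N i) :=
  ⟨fun f g => LinearMap.ext fun x => DFinsupp.ext fun i =>
    LinearMap.congr_fun (Subsingleton.elim (DirectSum.component Λ ι N i ∘ₗ f)
      (DirectSum.component Λ ι N i ∘ₗ g)) x⟩

end LinearMap

theorem range_le_of_subsingleton_linearMap_quotient {Λ L M : Type*} [Ring Λ] [AddCommMonoid L]
    [Module Λ L] [AddCommGroup M] [Module Λ M] {P Q : Submodule Λ M}
    (h : Subsingleton (L →ₗ[Λ] P ⧸ Q.comap P.subtype)) {f : L →ₗ[Λ] M}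
    (hf : LinearMap.range f ≤ P) : LinearMap.range f ≤ Q := by
  let f' : L →ₗ[Λ] P := f.codRestrict P fun x => hf ⟨x, rfl⟩
  have mkQ_comp_eq_zero : (Q.comap P.subtype).mkQ ∘ₗ f' = 0 := Subsingleton.elim _ _
  rintro _ ⟨x, rfl⟩
  exact (Submodule.Quotient.mk_eq_zero (Q.comap P.subtype)).1
    (LinearMap.congr_fun mkQ_comp_eq_zero x)

theorem le_traceSubmodule {Λ M : Type u} [Ring Λ] [AddCommGroup M] [Module Λ M]
    (P : Submodule Λ M) : P ≤ traceSubmodule Λ P M :=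
  P.range_subtype.symm.trans_le (le_iSup (fun f : P →ₗ[Λ] M => LinearMap.range f) P.subtype)

theorem traceSubmodule_le_iff {Λ L M : Type u} [Ring Λ] [AddCommGroup L] [Module Λ L]
    [AddCommGroup M] [Module Λ M] {P : Submodule Λ M} :
    traceSubmodule Λ L M ≤ P ↔ ∀ f : L →ₗ[Λ] M, LinearMap.range f ≤ P :=
  iSup_le_iff

section Filtration

variable {Λ : Type u} [Ring Λ] {Ω : Type v} [Preorder Ω] [Fintype Ω]
  {Δ : Ω → Type u} [∀ ω, AddCommGroup (Δ ω)] [∀ ω, Module Λ (Δ ω)]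
  {M M' : Type u} [AddCommGroup M] [Module Λ M] [AddCommGroup M'] [Module Λ M']
  {L : Type*} [AddCommMonoid L] [Module Λ L]
  {a : ℕ} {W : ℕ → Submodule Λ M} {W' : ℕ → Submodule Λ M'} {n n' : Ω → ℕ}

theorem subsingleton_linearMap_of_heightFun_lt
    (hs3 : ∀ ω ω' (f : Δ ω →ₗ[Λ] Δ ω'), f ≠ 0 → ω ≤ ω') {ω ω' : Ω}
    (h : heightFun ω' < heightFun ω) : Subsingleton (Δ ω →ₗ[Λ] Δ ω') :=
  subsingleton_of_forall_eq 0 fun f => by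
    by_contra hf
    exact (heightFun_monotone (hs3 ω ω' f hf)).not_gt h

namespace IsHFiltration

theorem subsingleton_linearMap_to_layer (hW : IsHFiltration Λ Δ a W n) {i : ℕ} (hi : 1 ≤ i)
    (hia : i ≤ a) (h : ∀ ω, heightFun ω = i → Subsingleton (L →ₗ[Λ] Δ ω)) :
    Subsingleton (L →ₗ[Λ] W i ⧸ (W (i + 1)).comap (W i).subtype) := by
  obtain ⟨e⟩ := hW.2.2.2 i hi hia
  have (ω : {ω : Ω // heightFun ω = i}) : Subsingleton (L →ₗ[Λ] Δ ω) := h ω ω.2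
  exact (LinearEquiv.arrowCongrAddEquiv (.refl Λ L) e).injective.subsingleton

theorem subsingleton_linearMap_from_bottom (hW : IsHFiltration Λ Δ a W n) (ha : 1 ≤ a)
    (h : ∀ ω, heightFun ω = a → Subsingleton (Δ ω →ₗ[Λ] L)) :
    Subsingleton (W a →ₗ[Λ] L) := by
  obtain ⟨e⟩ := hW.2.2.2 a ha le_rfl
  have comap_eq_bot : (W (a + 1)).comap (W a).subtype = ⊥ := by
    rw [hW.1, Submodule.comap_bot, Submodule.ker_subtype]
  have (ω : {ω : Ω // heightFun ω = a}) : Subsingleton (Δ ω →ₗ[Λ] L) := h ω ω.2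
  exact (LinearEquiv.arrowCongrAddEquiv ((Submodule.quotEquivOfEqBot _ comap_eq_bot).symm.trans e)
    (.refl Λ L)).injective.subsingleton

theorem range_le (hW : IsHFiltration Λ Δ a W n) {i : ℕ} (hi : 1 ≤ i) (hia : i ≤ a + 1)
    (h : ∀ ω, heightFun ω < i → Subsingleton (L →ₗ[Λ] Δ ω)) (f : L →ₗ[Λ] M) :
    LinearMap.range f ≤ W i := by
  induction i, hi using Nat.le_induction with
  | base => exact hW.2.1 ▸ le_top
  | succ i hi ih =>
    refine range_le_of_subsingleton_linearMap_quotient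
      (hW.subsingleton_linearMap_to_layer hi (by lia) fun ω hω => h ω (by lia)) ?_
    exact ih (by lia) fun ω hω => h ω (by lia)

theorem traceSubmodule_bottom_le (hs3 : ∀ ω ω' (f : Δ ω →ₗ[Λ] Δ ω'), f ≠ 0 → ω ≤ ω')
    (hW : IsHFiltration Λ Δ a W n) (hW' : IsHFiltration Λ Δ a W' n') :
    traceSubmodule Λ (W' a) M ≤ W a := by
  obtain rfl | ha := a.eq_zero_or_pos
  · have bot_eq_top : (⊥ : Submodule Λ M) = ⊤ := hW.1.symm.trans hW.2.1
    exact le_top.trans (bot_eq_top.symm.trans_le bot_le)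
  · refine traceSubmodule_le_iff.2 (hW.range_le ha a.le_succ fun ω hω => ?_)
    refine hW'.subsingleton_linearMap_from_bottom ha fun ω' hω' => ?_
    exact subsingleton_linearMap_of_heightFun_lt hs3 (hω.trans_eq hω'.symm)

end IsHFiltration

end Filtration

theorem hFiltration_bottom_layer_unique_general
    {Λ : Type u} [Ring Λ] {Ω : Type v} [Preorder Ω] [Fintype Ω]
    {Δ : Ω → Type u} [∀ ω, AddCommGroup (Δ ω)] [∀ ω, Module Λ (Δ ω)]
    (hs3 : ∀ ω ω' (f : Δ ω →ₗ[Λ] Δ ω'), f ≠ 0 → ω ≤ ω')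
    {M : Type u} [AddCommGroup M] [Module Λ M] {a : ℕ} {W W' : ℕ → Submodule Λ M}
    {n n' : Ω → ℕ} (hW : IsHFiltration Λ Δ a W n) (hW' : IsHFiltration Λ Δ a W' n') :
    W a = W' a ∧ W a = traceSubmodule Λ (W a) M :=
  ⟨le_antisymm ((le_traceSubmodule _).trans (hW'.traceSubmodule_bottom_le hs3 hW))
      ((le_traceSubmodule _).trans (hW.traceSubmodule_bottom_le hs3 hW')),
    le_antisymm (le_traceSubmodule _) (hW.traceSubmodule_bottom_le hs3 hW)⟩

/-- The bottom layer `W a` of an `h`-filtration of `M ∈ 𝔉(Δ)` is uniquely determined by `M`: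
any two `h`-filtrations have the same bottom layer, which equals the trace `tr_{W a}(M)`. -/
theorem hFiltration_bottom_layer_unique
    {R : Type u} [CommRing R] [IsArtinianRing R]
    {Λ : Type u} [Ring Λ] [Algebra R Λ] [Module.Finite R Λ]
    {Ω : Type v} [Preorder Ω] [Fintype Ω] [Nonempty Ω]
    (Δ : Ω → Type u) [∀ ω, AddCommGroup (Δ ω)] [∀ ω, Module Λ (Δ ω)]
    (hs : IsHomologicalSystem Λ Δ)
    (a : ℕ) (hIm : Set.range (fun ω : Ω => heightFun ω) = Set.Icc 1 a)
    (M : Type u) [AddCommGroup M] [Module Λ M] [Module.Finite Λ M]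
    (hM : MemFiltCat Λ Δ M)
    (W W' : ℕ → Submodule Λ M) (n n' : Ω → ℕ)
    (hW : IsHFiltration Λ Δ a W n) (hW' : IsHFiltration Λ Δ a W' n') :
    W a = W' a ∧ W a = traceSubmodule Λ (↥(W a)) M :=
  hFiltration_bottom_layer_unique_general hs.hs3 hW hW'
end

section
/- Let (Δ; Ω, ≤) be a homological system over an Artin algebra Λ, let L, N ∈ F(Δ), and let 0 → L → M → N → 0 be a short exact sequence of Λ-modules. Then M ∈ F(Δ) and ℓ_ω(M) = ℓ_ω(L) + ℓ_ω(N) for every ω ∈ Ω. -/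
universe u v

open DirectSum

/-!
In a `Δ`-filtration, two consecutive factors `Δ a` (below) and `Δ b` (above) with `¬ b < a` can be
interchanged, because the extension between them splits. Hence, for every lower set `I` of labels,
the filtration can be rearranged so that the factors with labels in `I` sit on top. The submodule
`V` below them does not depend on the filtration: there is no nonzero map from a `Δ a` with `a ∉ I`
to a `Δ b` with `b ∈ I`, so the submodules `V` and `V'` coming from two filtrations contain each
other.

Taking `I = {ω ≤ α}` and then `I = {ω < α}`, the factors with label equivalent to `α` form a layer
that is common to both filtrations. They have no extensions with each other, so the layer is their
direct sum, and the number of factors `Δ α` is its multiplicity as a summand. This is an invariant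
of the layer by Krull–Schmidt: `End (Δ α)` is local, and the multiplicity of `Δ α` in `X` is the
length over `End (Δ α)` of the maps `X → Δ α` modulo those that are not split epimorphisms.

The multiplicities `ℓ_ω` are thus well defined, and they are additive because filtrations of the
ends of a short exact sequence concatenate to a filtration of the middle term.
-/

section Factors

variable {Λ M N A B : Type*} [Ring Λ] [AddCommGroup M] [Module Λ M] [AddCommGroup N] [Module Λ N]
  [AddCommGroup A] [Module Λ A] [AddCommGroup B] [Module Λ B]
  {S S' T T' U : Submodule Λ M}

/-- `IsFactor A S T` says that `S ≤ T` and `T / S ≅ A`. The isomorphism is encoded by the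
surjection `T → A` with kernel `S`, which avoids quotients of subtypes. -/
def IsFactor (A : Type*) [AddCommGroup A] [Module Λ A] (S T : Submodule Λ M) : Prop :=
  S ≤ T ∧ ∃ p : T →ₗ[Λ] A, Function.Surjective p ∧ ∀ x : T, p x = 0 ↔ (x : M) ∈ S

theorem isFactor_iff_nonempty_equiv :
    IsFactor A S T ↔ S ≤ T ∧ Nonempty ((T ⧸ S.comap T.subtype) ≃ₗ[Λ] A) := by
  refine and_congr_right fun _ ↦ ⟨fun ⟨p, hp, hker⟩ ↦ ?_, fun ⟨e⟩ ↦ ?_⟩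
  · have hS : S.comap T.subtype = LinearMap.ker p := by
      ext x
      exact (hker x).symm
    exact ⟨(Submodule.quotEquivOfEq _ _ hS).trans (p.quotKerEquivOfSurjective hp)⟩
  · refine ⟨e.toLinearMap ∘ₗ Submodule.mkQ _,
      e.surjective.comp (Submodule.mkQ_surjective _), fun x ↦ ?_⟩
    simp

namespace IsFactor

theorem nonempty_equiv (hA : IsFactor A S T) (hB : IsFactor B S T) : Nonempty (A ≃ₗ[Λ] B) := by
  obtain ⟨-, ⟨e⟩⟩ := isFactor_iff_nonempty_equiv.mp hA
  obtain ⟨-, ⟨e'⟩⟩ := isFactor_iff_nonempty_equiv.mp hB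
  exact ⟨e.symm.trans e'⟩

theorem lt [Nontrivial A] (h : IsFactor A S T) : S < T := by
  obtain ⟨hST, p, hp, hker⟩ := h
  refine lt_of_le_not_ge hST fun hTS ↦ ?_
  obtain ⟨a, ha⟩ := exists_ne (0 : A)
  obtain ⟨x, rfl⟩ := hp a
  exact ha ((hker x).mpr (hTS x.2))

protected theorem map {f : M →ₗ[Λ] N} (hf : Function.Injective f) (h : IsFactor A S T) :
    IsFactor A (S.map f) (T.map f) := by
  obtain ⟨hST, p, hp, hker⟩ := h
  let e := T.equivMapOfInjective f hf
  refine ⟨Submodule.map_mono hST, p ∘ₗ e.symm.toLinearMap, hp.comp e.symm.surjective,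
    e.surjective.forall.mpr fun x ↦ ?_⟩
  simp [e, hker, hf.eq_iff]

protected theorem comap {g : N →ₗ[Λ] M} (hg : Function.Surjective g) (h : IsFactor A S T) :
    IsFactor A (S.comap g) (T.comap g) := by
  obtain ⟨hST, p, hp, hker⟩ := h
  refine ⟨Submodule.comap_mono hST, p ∘ₗ g.restrict fun _ hx ↦ hx, fun a ↦ ?_, fun x ↦ hker _⟩
  obtain ⟨⟨y, hy⟩, rfl⟩ := hp a
  obtain ⟨x, rfl⟩ := hg y
  exact ⟨⟨x, hy⟩, rfl⟩

theorem inf_iff_sup : IsFactor A (S ⊓ T) T ↔ IsFactor A S (S ⊔ T) := by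
  have hinf : (S ⊓ T).comap T.subtype = T.comap T.subtype ⊓ S.comap T.subtype := by
    rw [← Submodule.comap_inf, inf_comm]
  rw [isFactor_iff_nonempty_equiv, isFactor_iff_nonempty_equiv, hinf, sup_comm S T]
  let e := LinearMap.quotientInfEquivSupQuotient T S
  exact and_congr (iff_of_true inf_le_right le_sup_right)
    ⟨fun ⟨e'⟩ ↦ ⟨e.symm.trans e'⟩, fun ⟨e'⟩ ↦ ⟨e.trans e'⟩⟩

protected theorem prod (hT : IsFactor A T U) (hT' : IsFactor B T' U) (hU : T ⊔ T' = U) :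
    IsFactor (A × B) (T ⊓ T') U := by
  obtain ⟨hTU, p, hp, hker⟩ := hT
  obtain ⟨hTU', p', hp', hker'⟩ := hT'
  have decompose (x : U) : ∃ y z : U, p y = 0 ∧ p' z = 0 ∧ y + z = x := by
    obtain ⟨y, hy, z, hz, hyz⟩ := Submodule.mem_sup.mp (hU.ge x.2)
    exact ⟨⟨y, hTU hy⟩, ⟨z, hTU' hz⟩, (hker _).mpr hy, (hker' _).mpr hz, Subtype.ext hyz⟩
  refine ⟨inf_le_left.trans hTU, p.prod p', fun ⟨a, b⟩ ↦ ?_, fun x ↦ ?_⟩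
  · obtain ⟨u, rfl⟩ := hp a
    obtain ⟨v, rfl⟩ := hp' b
    obtain ⟨y, z, hy, hz, rfl⟩ := decompose u
    obtain ⟨y', z', hy', hz', rfl⟩ := decompose v
    exact ⟨z + y', by simp [hy, hz, hy', hz']⟩
  · simp [hker, hker']

theorem le_of_hom_eq_zero (hA : IsFactor A S T) (hB : IsFactor B S' T')
    (hom : ∀ f : A →ₗ[Λ] B, f = 0) (hS : S ≤ S') (hT : T ≤ T') : T ≤ S' := by
  obtain ⟨-, p, hp, hker⟩ := hA
  obtain ⟨-, q, -, hker'⟩ := hB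
  have hle : LinearMap.ker p ≤ LinearMap.ker (q ∘ₗ Submodule.inclusion hT) := fun x hx ↦
    (hker' _).mpr (hS ((hker x).mp hx))
  intro x hx
  have hzero := LinearMap.congr_fun
    (hom ((LinearMap.ker p).liftQ _ hle ∘ₗ (p.quotKerEquivOfSurjective hp).symm.toLinearMap))
    (p ⟨x, hx⟩)
  have hsymm : (p.quotKerEquivOfSurjective hp).symm (p ⟨x, hx⟩) = Submodule.Quotient.mk ⟨x, hx⟩ :=
    (LinearEquiv.symm_apply_eq _).mpr rfl
  rw [LinearMap.comp_apply, LinearEquiv.coe_coe, hsymm, Submodule.liftQ_apply] at hzero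
  exact (hker' _).mp hzero

theorem exists_exact (hA : IsFactor A S T) (hB : IsFactor B T U) :
    ∃ (f : A →ₗ[Λ] U ⧸ S.comap U.subtype) (g : (U ⧸ S.comap U.subtype) →ₗ[Λ] B),
      Function.Injective f ∧ Function.Surjective g ∧ LinearMap.range f = LinearMap.ker g ∧
        ∀ x : U, g (Submodule.Quotient.mk x) = 0 ↔ (x : M) ∈ T := by
  obtain ⟨hST, p, hp, hkerp⟩ := hA
  obtain ⟨hTU, q, hq, hkerq⟩ := hB
  let ι := (S.comap U.subtype).mkQ ∘ₗ Submodule.inclusion hTU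
  have hι : LinearMap.ker p = LinearMap.ker ι := by
    ext x
    exact (hkerp x).trans
      (Submodule.Quotient.mk_eq_zero (S.comap U.subtype) (x := Submodule.inclusion hTU x)).symm
  have hS : S.comap U.subtype ≤ LinearMap.ker q := fun x hx ↦
    (hkerq x).mpr (hST (Submodule.mem_comap.mp hx))
  let e := p.quotKerEquivOfSurjective hp
  refine ⟨(LinearMap.ker p).liftQ ι hι.le ∘ₗ e.symm.toLinearMap,
    (S.comap U.subtype).liftQ q hS, ?_, ?_, ?_, hkerq⟩
  · exact (LinearMap.ker_eq_bot.mp (Submodule.ker_liftQ_eq_bot _ _ hι.le hι.ge)).comp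
      e.symm.injective
  · exact fun b ↦ (hq b).imp' Submodule.Quotient.mk fun _ ↦ id
  · rw [LinearEquiv.range_comp, Submodule.range_liftQ, Submodule.ker_liftQ]
    ext y
    constructor
    · rintro ⟨x, rfl⟩
      exact ⟨Submodule.inclusion hTU x, (hkerq _).mpr x.2, rfl⟩
    · rintro ⟨x, hx, rfl⟩
      exact ⟨⟨x, (hkerq x).mp hx⟩, rfl⟩

end IsFactor

end Factors

theorem EverySESSplits.exists_inf_eq_sup_eq_s10 {Λ A B M : Type u} [Ring Λ]
    [AddCommGroup A] [Module Λ A] [AddCommGroup B] [Module Λ B] [AddCommGroup M] [Module Λ M]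
    {S T U : Submodule Λ M}
    (split : EverySESSplits Λ A B) (hA : IsFactor A S T) (hB : IsFactor B T U) :
    ∃ T', T ⊓ T' = S ∧ T ⊔ T' = U := by
  obtain ⟨f, g, hf, hg, hfg, hker⟩ := hA.exists_exact hB
  obtain ⟨s, hs⟩ := split _ f g hf hg hfg
  have hgs (b : B) : g (s b) = b := LinearMap.congr_fun hs b
  let π := (S.comap U.subtype).mkQ
  have hπ (x : U) : π x = 0 ↔ (x : M) ∈ S := Submodule.Quotient.mk_eq_zero _
  -- The points of `U` whose class modulo `S` lies in the image of the section.
  refine ⟨(LinearMap.eqLocus π (s ∘ₗ g ∘ₗ π)).map U.subtype, ?_, ?_⟩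
  · ext x
    constructor
    · rintro ⟨hxT, x, hx, rfl⟩
      have hgx : g (π x) = 0 := (hker x).mpr hxT
      have hx : π x = s (g (π x)) := hx
      exact (hπ x).mp (by rw [hx, hgx, map_zero])
    · intro hx
      have hxT := hA.1 hx
      refine ⟨hxT, ⟨x, hB.1 hxT⟩, ?_, rfl⟩
      change π _ = s (g (π _))
      rw [(hπ _).mpr hx, map_zero, map_zero]
  · refine le_antisymm (sup_le hB.1 (Submodule.map_subtype_le _ _)) fun x hx ↦ ?_
    obtain ⟨y, hy⟩ := Submodule.mkQ_surjective _ (s (g (π ⟨x, hx⟩)))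
    have hgy : g (π y) = g (π ⟨x, hx⟩) := (congrArg g hy).trans (hgs _)
    have hxy : x - y ∈ T := (hker (⟨x, hx⟩ - y)).mp (by
      rw [Submodule.Quotient.mk_sub, map_sub]
      exact sub_eq_zero.mpr hgy.symm)
    exact Submodule.mem_sup.mpr ⟨x - y, hxy, y,
      ⟨y, hy.trans (congrArg s hgy.symm), rfl⟩, sub_add_cancel _ _⟩

section Chains

variable {Ω : Type*}

/-- `FactorChain Δ S s U` says that some chain of submodules from `S` up to `U` has successive
factors `Δ ω`, where `ω` runs over the multiset of labels `s`. -/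
inductive FactorChain {Λ M : Type*} [Ring Λ] [AddCommGroup M] [Module Λ M]
    (Δ : Ω → Type*) [∀ ω, AddCommGroup (Δ ω)] [∀ ω, Module Λ (Δ ω)] (S : Submodule Λ M) :
    Multiset Ω → Submodule Λ M → Prop
  | nil : FactorChain Δ S 0 S
  | snoc {s : Multiset Ω} {T U : Submodule Λ M} {a : Ω} :
      FactorChain Δ S s T → IsFactor (Δ a) T U → FactorChain Δ S (a ::ₘ s) U

namespace FactorChain

section Basic

variable {Λ L M N : Type*} [Ring Λ] [AddCommGroup L] [Module Λ L] [AddCommGroup M]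
  [Module Λ M] [AddCommGroup N] [Module Λ N]
  {Δ : Ω → Type*} [∀ ω, AddCommGroup (Δ ω)] [∀ ω, Module Λ (Δ ω)]
  {S S' T T' U : Submodule Λ M} {s t : Multiset Ω}

theorem le (h : FactorChain Δ S s T) : S ≤ T := by
  induction h with
  | nil => exact le_rfl
  | snoc _ hTU ih => exact ih.trans hTU.1

theorem trans (hST : FactorChain Δ S s T) (hTU : FactorChain Δ T t U) :
    FactorChain Δ S (s + t) U := by
  induction hTU with
  | nil => rwa [add_zero]
  | snoc _ hU ih => rw [Multiset.add_cons]; exact ih.snoc hU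

protected theorem map {f : M →ₗ[Λ] N} (hf : Function.Injective f) (h : FactorChain Δ S s T) :
    FactorChain Δ (S.map f) s (T.map f) := by
  induction h with
  | nil => exact nil
  | snoc _ hU ih => exact ih.snoc (hU.map hf)

protected theorem comap {g : N →ₗ[Λ] M} (hg : Function.Surjective g) (h : FactorChain Δ S s T) :
    FactorChain Δ (S.comap g) s (T.comap g) := by
  induction h with
  | nil => exact nil
  | snoc _ hU ih => exact ih.snoc (hU.comap hg)

theorem of_exact {f : L →ₗ[Λ] M} {g : M →ₗ[Λ] N} (hf : Function.Injective f)
    (hg : Function.Surjective g) (hfg : LinearMap.range f = LinearMap.ker g)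
    (hL : FactorChain Δ (⊥ : Submodule Λ L) s ⊤) (hN : FactorChain Δ (⊥ : Submodule Λ N) t ⊤) :
    FactorChain Δ (⊥ : Submodule Λ M) (s + t) ⊤ := by
  have hlower := hL.map hf
  rw [Submodule.map_bot, Submodule.map_top, hfg] at hlower
  exact hlower.trans (hN.comap hg)

theorem le_of_hom_eq_zero_of_isFactor {A : Type*} [AddCommGroup A] [Module Λ A]
    (hA : IsFactor A S T) (ht : FactorChain Δ S' t T')
    (hom : ∀ b ∈ t, ∀ f : A →ₗ[Λ] Δ b, f = 0) (hS : S ≤ S') (hT : T ≤ T') : T ≤ S' := by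
  induction ht with
  | nil => exact hT
  | snoc ht' hb ih =>
    rw [Multiset.forall_mem_cons] at hom
    exact ih hom.2 (hA.le_of_hom_eq_zero hb hom.1 (hS.trans ht'.le) hT)

theorem le_of_hom_eq_zero (hs : FactorChain Δ S s T) (ht : FactorChain Δ S' t T')
    (hom : ∀ a ∈ s, ∀ b ∈ t, ∀ f : Δ a →ₗ[Λ] Δ b, f = 0) (hS : S ≤ S') (hT : T ≤ T') :
    T ≤ S' := by
  induction hs with
  | nil => exact hS
  | snoc _ ha ih =>
    rw [Multiset.forall_mem_cons] at hom
    exact le_of_hom_eq_zero_of_isFactor ha ht hom.1 (ih hom.2 (ha.1.trans hT)) hT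

theorem of_fin {n : ℕ} {F : Fin (n + 1) → Submodule Λ M} {w : Fin n → Ω}
    (hF : ∀ i : Fin n, IsFactor (Δ (w i)) (F i.castSucc) (F i.succ)) :
    FactorChain Δ (F 0) (Finset.univ.val.map w) (F (Fin.last n)) := by
  induction n with
  | zero => exact nil
  | succ n ih =>
    have hchain := (ih (F := F ∘ Fin.castSucc) fun i ↦ hF i.castSucc).snoc (hF (Fin.last n))
    simpa [Fin.univ_castSuccEmb, Function.comp_def] using hchain

theorem exists_fin (h : FactorChain Δ S s T) :
    ∃ (n : ℕ) (F : Fin (n + 1) → Submodule Λ M), F 0 = S ∧ F (Fin.last n) = T ∧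
      ∀ i : Fin n, ∃ ω, IsFactor (Δ ω) (F i.castSucc) (F i.succ) := by
  induction h with
  | nil => exact ⟨0, fun _ ↦ S, rfl, rfl, Fin.elim0⟩
  | @snoc _ T U a _ ha ih =>
    obtain ⟨n, F, hzero, hlast, hF⟩ := ih
    refine ⟨n + 1, Fin.snoc F U, ?_, Fin.snoc_last _ _, Fin.lastCases ?_ fun i ↦ ?_⟩
    · rw [← Fin.castSucc_zero, Fin.snoc_castSucc, hzero]
    · rw [Fin.succ_last, Fin.snoc_last, Fin.snoc_castSucc, hlast]
      exact ⟨a, ha⟩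
    · rw [Fin.succ_castSucc, Fin.snoc_castSucc, Fin.snoc_castSucc]
      exact hF i

end Basic

variable {Λ M : Type u} [Ring Λ] [AddCommGroup M] [Module Λ M] {Δ : Ω → Type u}
  [∀ ω, AddCommGroup (Δ ω)] [∀ ω, Module Λ (Δ ω)] {S T U : Submodule Λ M} {s t : Multiset Ω}

theorem exists_inf_eq_sup_eq_s10 {B : Type u} [AddCommGroup B] [Module Λ B]
    (hST : FactorChain Δ S s T) (hB : IsFactor B T U)
    (split : ∀ a ∈ s, EverySESSplits Λ (Δ a) B) :
    ∃ T', T ⊓ T' = S ∧ T ⊔ T' = U ∧ FactorChain Δ T' s U := by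
  induction hST generalizing U with
  | nil => exact ⟨U, inf_eq_left.mpr hB.1, sup_eq_right.mpr hB.1, nil⟩
  | @snoc s T₁ T a _ ha ih =>
    rw [Multiset.forall_mem_cons] at split
    obtain ⟨U₁, hinf₁, hsup₁⟩ := split.1.exists_inf_eq_sup_eq_s10 ha hB
    have hB₁ : IsFactor B T₁ U₁ := hinf₁ ▸ IsFactor.inf_iff_sup.mpr (hsup₁.symm ▸ hB)
    have ha₁ : IsFactor (Δ a) U₁ U := by
      rw [← hsup₁, sup_comm]
      exact IsFactor.inf_iff_sup.mp (by rwa [inf_comm, hinf₁])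
    obtain ⟨T', hinf, hsup, hchain⟩ := ih hB₁ split.2
    have hT' : T' ≤ U₁ := hsup ▸ le_sup_right
    refine ⟨T', ?_, ?_, hchain.snoc ha₁⟩
    · rw [← inf_eq_right.mpr hT', ← inf_assoc, hinf₁, hinf]
    · rw [← sup_eq_left.mpr ha.1, sup_assoc, hsup, hsup₁]

open scoped Classical in
theorem exists_filter {I : Set Ω} (split : ∀ a ∈ I, ∀ b ∉ I, EverySESSplits Λ (Δ a) (Δ b))
    (h : FactorChain Δ S s U) :
    ∃ V, FactorChain Δ S (s.filter (· ∉ I)) V ∧ FactorChain Δ V (s.filter (· ∈ I)) U := by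
  induction h with
  | nil => exact ⟨S, nil, nil⟩
  | @snoc s T U b _ hb ih =>
    obtain ⟨V, hlower, hupper⟩ := ih
    by_cases hbI : b ∈ I
    · rw [Multiset.filter_cons_of_neg (p := (· ∉ I)) s (not_not_intro hbI),
        Multiset.filter_cons_of_pos s hbI]
      exact ⟨V, hlower, hupper.snoc hb⟩
    · rw [Multiset.filter_cons_of_pos (p := (· ∉ I)) s hbI, Multiset.filter_cons_of_neg s hbI]
      obtain ⟨T', hinf, hsup, hchain⟩ := hupper.exists_inf_eq_sup_eq_s10 hb fun a ha ↦
        split a (Multiset.mem_filter.mp ha).2 b hbI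
      have hb' : IsFactor (Δ b) V T' := hinf ▸ IsFactor.inf_iff_sup.mpr (hsup.symm ▸ hb)
      exact ⟨T', hlower.snoc hb', hchain⟩

open scoped Classical in
theorem exists_common_filter {I : Set Ω}
    (split : ∀ a ∈ I, ∀ b ∉ I, EverySESSplits Λ (Δ a) (Δ b))
    (hom : ∀ a ∉ I, ∀ b ∈ I, ∀ f : Δ a →ₗ[Λ] Δ b, f = 0)
    (hs : FactorChain Δ S s U) (ht : FactorChain Δ S t U) :
    ∃ V, (FactorChain Δ S (s.filter (· ∉ I)) V ∧ FactorChain Δ V (s.filter (· ∈ I)) U) ∧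
      FactorChain Δ S (t.filter (· ∉ I)) V ∧ FactorChain Δ V (t.filter (· ∈ I)) U := by
  obtain ⟨V, hSV, hVU⟩ := hs.exists_filter split
  obtain ⟨V', hSV', hVU'⟩ := ht.exists_filter split
  have hle : V ≤ V' := hSV.le_of_hom_eq_zero hVU' (fun a ha b hb ↦
    hom a (Multiset.mem_filter.mp ha).2 b (Multiset.mem_filter.mp hb).2) hSV'.le hVU.le
  have hge : V' ≤ V := hSV'.le_of_hom_eq_zero hVU (fun a ha b hb ↦
    hom a (Multiset.mem_filter.mp ha).2 b (Multiset.mem_filter.mp hb).2) hSV.le hVU'.le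
  obtain rfl := le_antisymm hle hge
  exact ⟨V, ⟨hSV, hVU⟩, hSV', hVU'⟩

end FactorChain

end Chains

section LocalRings

variable {K : Type*} [Ring K] [IsLocalRing K]

theorem eq_zero_or_eq_one_of_isIdempotentElem {e : K} (he : IsIdempotentElem e) :
    e = 0 ∨ e = 1 := by
  rcases IsLocalRing.isUnit_or_isUnit_of_add_one (add_sub_cancel e 1) with h | h
  · exact Or.inr ((IsIdempotentElem.iff_eq_one_of_isUnit h).mp he)
  · exact Or.inl (sub_eq_self.mp ((IsIdempotentElem.iff_eq_one_of_isUnit h).mp he.one_sub))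

instance isDedekindFiniteMonoid_of_isLocalRing : IsDedekindFiniteMonoid K where
  mul_eq_one_symm {x y} hxy := by
    have idem : IsIdempotentElem (y * x) := by
      rw [IsIdempotentElem, mul_assoc, ← mul_assoc x, hxy, one_mul]
    refine (eq_zero_or_eq_one_of_isIdempotentElem idem).resolve_left fun hyx ↦ one_ne_zero' K ?_
    calc (1 : K) = x * (y * x) * y := by rw [← mul_assoc, hxy, one_mul, hxy]
      _ = 0 := by rw [hyx, mul_zero, zero_mul]

theorem mem_jacobson_iff_not_isUnit {x : K} : x ∈ Ring.jacobson K ↔ ¬IsUnit x := by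
  refine ⟨fun hx hunit ↦ (Ring.jacobson_lt_top K).ne (Ideal.eq_top_of_isUnit_mem _ hx hunit),
    fun hx ↦ ?_⟩
  rw [Ring.jacobson_eq_sInf_isMaximal, Submodule.mem_sInf]
  intro I hI
  by_contra hxI
  obtain ⟨y, i, hi, hyi⟩ := Ideal.IsMaximal.exists_inv hI hxI
  rcases IsLocalRing.isUnit_or_isUnit_of_add_one hyi with h | h
  · exact hx (IsUnit.mul_iff.mp h).2
  · exact hI.ne_top (Ideal.eq_top_of_isUnit_mem _ hi h)

end LocalRings

section Fitting

variable {Λ A : Type*} [Ring Λ] [AddCommGroup A] [Module Λ A] [IsArtinian Λ A] [IsNoetherian Λ A]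

theorem isNilpotent_or_isUnit_of_indecomposable
    (indecomposable : ∀ S T : Submodule Λ A, IsCompl S T → S = ⊥ ∨ T = ⊥)
    (f : Module.End Λ A) : IsNilpotent f ∨ IsUnit f := by
  obtain ⟨n, hn⟩ := Filter.eventually_atTop.mp (LinearMap.eventually_isCompl_ker_pow_range_pow f)
  have hcompl := hn (n + 1) n.le_succ
  rcases indecomposable _ _ hcompl with hker | hrange
  · have hbij : Function.Bijective (f ^ (n + 1)) :=
      ⟨LinearMap.ker_eq_bot.mp hker,
        LinearMap.range_eq_top.mp (eq_top_of_bot_isCompl (hker ▸ hcompl))⟩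
    exact Or.inr ((isUnit_pow_iff n.succ_ne_zero).mp ((Module.End.isUnit_iff _).mpr hbij))
  · exact Or.inl ⟨n + 1, LinearMap.range_eq_bot.mp hrange⟩

theorem isLocalRing_end_of_indecomposable [Nontrivial A]
    (indecomposable : ∀ S T : Submodule Λ A, IsCompl S T → S = ⊥ ∨ T = ⊥) :
    IsLocalRing (Module.End Λ A) :=
  .of_isUnit_or_isUnit_one_sub_self fun f ↦
    (isNilpotent_or_isUnit_of_indecomposable indecomposable f).symm.imp_right
      IsNilpotent.isUnit_one_sub

end Fitting

section Multiplicities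

variable (Λ A B X Y : Type*) [Ring Λ] [AddCommGroup A] [Module Λ A] [AddCommGroup B] [Module Λ B]
  [AddCommGroup X] [Module Λ X] [AddCommGroup Y] [Module Λ Y]

/-- The radical `rad(X, A) ⊆ Hom(X, A)`: the maps whose composites with all maps `A → X` lie in
the Jacobson radical of `End A`. When `End A` is local these are the maps that are not split
epimorphisms. -/
def homRadical : Submodule (Module.End Λ A) (X →ₗ[Λ] A) where
  carrier := {f | ∀ s : A →ₗ[Λ] X, f ∘ₗ s ∈ Ring.jacobson (Module.End Λ A)}
  add_mem' hf hg s := by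
    rw [LinearMap.add_comp]
    exact add_mem (hf s) (hg s)
  zero_mem' s := by
    rw [LinearMap.zero_comp]
    exact zero_mem _
  smul_mem' e _ hf s := Ideal.mul_mem_left _ e (hf s)

/-- For `End A` local, the multiplicity of `A` as a direct summand of `X`, computed as the length
of `Hom(X, A) / rad(X, A)` over `End A`. -/
noncomputable def summandMultiplicity : ℕ∞ :=
  Module.length (Module.End Λ A) ((X →ₗ[Λ] A) ⧸ homRadical Λ A X)

variable {Λ A B X Y}

theorem summandMultiplicity_congr (e : X ≃ₗ[Λ] Y) :
    summandMultiplicity Λ A X = summandMultiplicity Λ A Y := by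
  refine (Submodule.Quotient.equiv _ _ (LinearEquiv.congrLeft A (Module.End Λ A) e) ?_).length_eq
  ext f
  constructor
  · rintro ⟨f, hf, rfl⟩ s
    exact hf (e.symm.toLinearMap ∘ₗ s)
  · refine fun hf ↦ ⟨f ∘ₗ e.toLinearMap, fun s ↦ hf (e.toLinearMap ∘ₗ s), ?_⟩
    ext
    simp

theorem summandMultiplicity_prod : summandMultiplicity Λ A (X × Y) =
    summandMultiplicity Λ A X + summandMultiplicity Λ A Y := by
  let φ := ((homRadical Λ A X).mkQ.prodMap (homRadical Λ A Y).mkQ) ∘ₗ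
    (LinearMap.coprodEquiv (Module.End Λ A)).symm.toLinearMap
  have hφ : Function.Surjective φ :=
    ((Submodule.mkQ_surjective _).prodMap (Submodule.mkQ_surjective _)).comp
      (LinearEquiv.surjective _)
  have hker : homRadical Λ A (X × Y) = LinearMap.ker φ := by
    ext f
    simp only [LinearMap.mem_ker, φ, LinearMap.comp_apply, LinearEquiv.coe_coe,
      LinearMap.coprodEquiv_symm_apply, LinearMap.prodMap_apply, Prod.mk_eq_zero,
      Submodule.mkQ_apply, Submodule.Quotient.mk_eq_zero]
    refine ⟨fun hf ↦ ⟨fun s ↦ hf (.inl Λ X Y ∘ₗ s), fun s ↦ hf (.inr Λ X Y ∘ₗ s)⟩,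
      fun ⟨hX, hY⟩ s ↦ ?_⟩
    have hs : f ∘ₗ s =
        (f ∘ₗ .inl Λ X Y) ∘ₗ (.fst Λ X Y ∘ₗ s) + (f ∘ₗ .inr Λ X Y) ∘ₗ (.snd Λ X Y ∘ₗ s) := by
      ext a
      simp [← map_add]
    exact hs ▸ add_mem (hX _) (hY _)
  rw [summandMultiplicity, summandMultiplicity, summandMultiplicity, ← Module.length_prod]
  exact ((Submodule.quotEquivOfEq _ _ hker).trans (φ.quotKerEquivOfSurjective hφ)).length_eq

theorem summandMultiplicity_of_subsingleton [Subsingleton X] :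
    summandMultiplicity Λ A X = 0 := by
  have : Subsingleton (X →ₗ[Λ] A) := inferInstance
  exact Module.length_eq_zero

theorem nonempty_equiv_of_isUnit_comp [Nontrivial (Module.End Λ A)] [IsLocalRing (Module.End Λ B)]
    {f : B →ₗ[Λ] A} {s : A →ₗ[Λ] B}
    (h : IsUnit (f ∘ₗ s : Module.End Λ A)) : Nonempty (B ≃ₗ[Λ] A) := by
  obtain ⟨v, hv⟩ := h.exists_left_inv
  let g := v ∘ₗ f
  have hgs : g ∘ₗ s = LinearMap.id := hv
  have idem : IsIdempotentElem (s ∘ₗ g : Module.End Λ B) := by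
    change s ∘ₗ (g ∘ₗ s) ∘ₗ g = s ∘ₗ g
    rw [hgs, LinearMap.id_comp]
  rcases eq_zero_or_eq_one_of_isIdempotentElem idem with hsg | hsg
  · have hid : (1 : Module.End Λ A) = 0 := by
      calc (1 : Module.End Λ A) = (g ∘ₗ s) ∘ₗ g ∘ₗ s := by rw [hgs]; rfl
        _ = g ∘ₗ (s ∘ₗ g) ∘ₗ s := rfl
        _ = 0 := by rw [hsg, LinearMap.zero_comp, LinearMap.comp_zero]
    exact (one_ne_zero hid).elim
  · exact ⟨LinearEquiv.ofLinearMap g s hgs hsg⟩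

variable [IsLocalRing (Module.End Λ A)]

theorem mem_homRadical_iff_forall_not_isUnit {f : X →ₗ[Λ] A} :
    f ∈ homRadical Λ A X ↔ ∀ s : A →ₗ[Λ] X, ¬IsUnit (f ∘ₗ s : Module.End Λ A) :=
  forall_congr' fun _ ↦ mem_jacobson_iff_not_isUnit

theorem mem_homRadical_self_iff_not_isUnit {f : Module.End Λ A} :
    f ∈ homRadical Λ A A ↔ ¬IsUnit f :=
  mem_homRadical_iff_forall_not_isUnit.trans
    ⟨fun h ↦ h 1, fun h _ hs ↦ h (IsUnit.mul_iff.mp hs).1⟩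

theorem summandMultiplicity_self : summandMultiplicity Λ A A = 1 := by
  rw [summandMultiplicity, Module.length_eq_one_iff, isSimpleModule_iff_isCoatom]
  refine ⟨fun htop ↦ mem_homRadical_self_iff_not_isUnit.mp (htop ▸ Submodule.mem_top) isUnit_one,
    fun W hW ↦ ?_⟩
  obtain ⟨f, hfW, hf⟩ := SetLike.exists_of_lt hW
  obtain ⟨u, rfl⟩ := not_not.mp fun h ↦ hf (mem_homRadical_self_iff_not_isUnit.mpr h)
  refine eq_top_iff.mpr fun g _ ↦ ?_
  have hg : (g * ↑u⁻¹ : Module.End Λ A) * u = g := u.inv_mul_cancel_right g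
  exact hg ▸ W.smul_mem _ hfW

theorem summandMultiplicity_eq_zero [IsLocalRing (Module.End Λ B)] (h : IsEmpty (B ≃ₗ[Λ] A)) :
    summandMultiplicity Λ A B = 0 := by
  rw [summandMultiplicity, Module.length_eq_zero_iff, Submodule.Quotient.subsingleton_iff]
  exact eq_top_iff.mpr fun f _ ↦ mem_homRadical_iff_forall_not_isUnit.mpr fun _ hs ↦
    not_isEmpty_iff.mpr (nonempty_equiv_of_isUnit_comp hs) h

end Multiplicities

section HomologicalSystems

variable {Ω : Type v} {Λ M : Type u} [Ring Λ] [AddCommGroup M] [Module Λ M]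
  {Δ : Ω → Type u} [∀ ω, AddCommGroup (Δ ω)] [∀ ω, Module Λ (Δ ω)]
  {S U : Submodule Λ M} {s t : Multiset Ω}

theorem FactorChain.summandMultiplicity_eq_count [DecidableEq Ω]
    [∀ ω, IsLocalRing (Module.End Λ (Δ ω))]
    (nonIso : Pairwise fun ω ω' ↦ IsEmpty (Δ ω ≃ₗ[Λ] Δ ω')) {X : Type u} [AddCommGroup X]
    [Module Λ X] (hs : FactorChain Δ S s U) (hX : IsFactor X S U)
    (split : ∀ a ∈ s, ∀ b ∈ s, EverySESSplits Λ (Δ a) (Δ b)) (α : Ω) :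
    summandMultiplicity Λ (Δ α) X = s.count α := by
  induction hs generalizing X with
  | nil =>
    have : Subsingleton X := not_nontrivial_iff_subsingleton.mp fun _ ↦ hX.lt.false
    rw [summandMultiplicity_of_subsingleton, Multiset.count_zero, Nat.cast_zero]
  | @snoc s T U a hs ha ih =>
    let Y := T ⧸ S.comap T.subtype
    have hY : IsFactor Y S T := isFactor_iff_nonempty_equiv.mpr ⟨hs.le, ⟨.refl Λ Y⟩⟩
    have split_tail : ∀ b ∈ s, ∀ c ∈ s, EverySESSplits Λ (Δ b) (Δ c) := fun b hb c hc ↦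
      split b (Multiset.mem_cons_of_mem hb) c (Multiset.mem_cons_of_mem hc)
    obtain ⟨T', hinf, hsup, -⟩ := hs.exists_inf_eq_sup_eq_s10 ha fun b hb ↦
      split b (Multiset.mem_cons_of_mem hb) a (Multiset.mem_cons_self a s)
    have hY' : IsFactor Y T' U := by
      rw [← hsup, sup_comm]
      exact IsFactor.inf_iff_sup.mp (by rwa [inf_comm, hinf])
    obtain ⟨e⟩ := hX.nonempty_equiv (hinf ▸ ha.prod hY' hsup)
    have head : summandMultiplicity Λ (Δ α) (Δ a) = if α = a then 1 else 0 := by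
      split_ifs with h
      · exact h ▸ summandMultiplicity_self
      · exact summandMultiplicity_eq_zero (nonIso (Ne.symm h))
    rw [summandMultiplicity_congr e, summandMultiplicity_prod, ih hY split_tail, head,
      Multiset.count_cons, add_comm]
    push_cast
    rfl

namespace IsHomologicalSystem

variable [Preorder Ω] [Fintype Ω]

theorem isLocalRing_end [IsArtinianRing Λ] (hΔ : IsHomologicalSystem Λ Δ) (ω : Ω) :
    IsLocalRing (Module.End Λ (Δ ω)) := by
  have := hΔ.fg ω
  have := hΔ.nontrivial ω
  exact isLocalRing_end_of_indecomposable (hΔ.indecomposable ω)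

open scoped Classical in
theorem exists_common_filter (hΔ : IsHomologicalSystem Λ Δ) {I : Set Ω} (hI : IsLowerSet I)
    (hs : FactorChain Δ S s U) (ht : FactorChain Δ S t U) :
    ∃ V, (FactorChain Δ S (s.filter (· ∉ I)) V ∧ FactorChain Δ V (s.filter (· ∈ I)) U) ∧
      FactorChain Δ S (t.filter (· ∉ I)) V ∧ FactorChain Δ V (t.filter (· ∈ I)) U :=
  hs.exists_common_filter (fun a ha b hb ↦ hΔ.hs4 b a fun hba ↦ hb (hI hba.1 ha))
    (fun a ha b hb f ↦ by_contra fun hf ↦ ha (hI (hΔ.hs3 a b f hf) hb)) ht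

theorem count_eq_count_of_antisymmRel [DecidableEq Ω] [∀ ω, IsLocalRing (Module.End Λ (Δ ω))]
    (hΔ : IsHomologicalSystem Λ Δ) {α : Ω} (hs : FactorChain Δ S s U) (ht : FactorChain Δ S t U)
    (hsα : ∀ a ∈ s, AntisymmRel (· ≤ ·) a α) (htα : ∀ a ∈ t, AntisymmRel (· ≤ ·) a α) :
    s.count α = t.count α := by
  have hX : IsFactor (U ⧸ S.comap U.subtype) S U :=
    isFactor_iff_nonempty_equiv.mpr ⟨hs.le, ⟨.refl Λ _⟩⟩
  have split {a b : Ω} (ha : AntisymmRel (· ≤ ·) a α) (hb : AntisymmRel (· ≤ ·) b α) :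
      EverySESSplits Λ (Δ a) (Δ b) := hΔ.hs4 b a fun h ↦ h.2 (ha.1.trans hb.2)
  have nonIso : Pairwise fun ω ω' ↦ IsEmpty (Δ ω ≃ₗ[Λ] Δ ω') := fun ω ω' ↦
    hΔ.pairwise_nonIso ω ω'
  have hcount := hs.summandMultiplicity_eq_count nonIso hX
    (fun a ha b hb ↦ split (hsα a ha) (hsα b hb)) α
  rw [ht.summandMultiplicity_eq_count nonIso hX
    (fun a ha b hb ↦ split (htα a ha) (htα b hb)) α] at hcount
  exact (Nat.cast_injective hcount).symm

theorem labels_unique [∀ ω, IsLocalRing (Module.End Λ (Δ ω))] (hΔ : IsHomologicalSystem Λ Δ)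
    (hs : FactorChain Δ S s U) (ht : FactorChain Δ S t U) : s = t := by
  classical
  refine Multiset.ext.mpr fun α ↦ ?_
  obtain ⟨V, ⟨-, hsV⟩, -, htV⟩ := hΔ.exists_common_filter (isLowerSet_Iic α) hs ht
  obtain ⟨W, ⟨hsW, -⟩, htW, -⟩ := hΔ.exists_common_filter (isLowerSet_Iio α) hsV htV
  have count_layer (r : Multiset Ω) :
      ((r.filter (· ∈ Set.Iic α)).filter (· ∉ Set.Iio α)).count α = r.count α := by
    rw [Multiset.count_filter_of_pos (p := (· ∉ Set.Iio α)) (lt_irrefl α),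
      Multiset.count_filter_of_pos (p := (· ∈ Set.Iic α)) le_rfl]
  have layer_antisymmRel {r : Multiset Ω} {a : Ω}
      (ha : a ∈ (r.filter (· ∈ Set.Iic α)).filter (· ∉ Set.Iio α)) :
      AntisymmRel (· ≤ ·) a α := by
    obtain ⟨har, hlt⟩ := Multiset.mem_filter.mp ha
    have hle : a ≤ α := (Multiset.mem_filter.mp har).2
    exact ⟨hle, not_lt_iff_le_imp_ge.mp hlt hle⟩
  rw [← count_layer s, ← count_layer t]
  exact hΔ.count_eq_count_of_antisymmRel hsW htW
    (fun _ ↦ layer_antisymmRel) fun _ ↦ layer_antisymmRel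

end IsHomologicalSystem

end HomologicalSystems

section DeltaFiltrations

variable {Ω : Type v} {Λ : Type u} [Ring Λ] {Δ : Ω → Type u}
  [∀ ω, AddCommGroup (Δ ω)] [∀ ω, Module Λ (Δ ω)] {M : Type u} [AddCommGroup M] [Module Λ M]

namespace IsHomologicalSystem

variable [Preorder Ω] [Fintype Ω]

theorem isDeltaFiltration_iff (hΔ : IsHomologicalSystem Λ Δ) {t : ℕ}
    {F : Fin (t + 1) → Submodule Λ M} :
    IsDeltaFiltration Λ Δ t F ↔ F 0 = ⊥ ∧ F (Fin.last t) = ⊤ ∧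
      ∀ i : Fin t, ∃ ω, IsFactor (Δ ω) (F i.castSucc) (F i.succ) := by
  refine and_congr_right fun _ ↦ and_congr_right fun _ ↦ ⟨fun ⟨hmono, hF⟩ i ↦ ?_, fun hF ↦ ?_⟩
  · obtain ⟨ω, e⟩ := hF i
    exact ⟨ω, isFactor_iff_nonempty_equiv.mpr ⟨(hmono i.castSucc_lt_succ).le, e⟩⟩
  · refine ⟨Fin.strictMono_iff_lt_succ.mpr fun i ↦ ?_, fun i ↦ ?_⟩
    · obtain ⟨ω, hω⟩ := hF i
      have := hΔ.nontrivial ω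
      exact hω.lt
    · obtain ⟨ω, hω⟩ := hF i
      exact ⟨ω, (isFactor_iff_nonempty_equiv.mp hω).2⟩

theorem exists_factorChain_of_isDeltaFiltration [DecidableEq Ω] (hΔ : IsHomologicalSystem Λ Δ)
    {t : ℕ} {F : Fin (t + 1) → Submodule Λ M} (hF : IsDeltaFiltration Λ Δ t F) :
    ∃ s, FactorChain Δ (⊥ : Submodule Λ M) s ⊤ ∧ ∀ ω, ellOmega Λ Δ t F ω = s.count ω := by
  obtain ⟨hbot, htop, hfac⟩ := hΔ.isDeltaFiltration_iff.mp hF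
  choose w hw using hfac
  refine ⟨_, hbot ▸ htop ▸ FactorChain.of_fin hw, fun ω ↦ ?_⟩
  have label_iff (i : Fin t) :
      Nonempty ((F i.succ ⧸ (F i.castSucc).comap (F i.succ).subtype) ≃ₗ[Λ] Δ ω) ↔ ω = w i := by
    obtain ⟨-, ⟨e⟩⟩ := isFactor_iff_nonempty_equiv.mp (hw i)
    refine ⟨fun ⟨e'⟩ ↦ by_contra fun hne ↦ ?_, fun h ↦ h ▸ ⟨e⟩⟩
    exact (hΔ.pairwise_nonIso ω (w i) hne).false (e'.symm.trans e)
  rw [ellOmega, Multiset.count_map, Nat.card_congr (Equiv.subtypeEquivRight label_iff),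
    Nat.card_eq_fintype_card, Fintype.card_subtype]
  rfl

theorem memFiltCat_iff (hΔ : IsHomologicalSystem Λ Δ) :
    MemFiltCat Λ Δ M ↔ ∃ s, FactorChain Δ (⊥ : Submodule Λ M) s ⊤ := by
  classical
  constructor
  · rintro ⟨t, F, hF⟩
    obtain ⟨s, hs, -⟩ := hΔ.exists_factorChain_of_isDeltaFiltration hF
    exact ⟨s, hs⟩
  · rintro ⟨s, hs⟩
    obtain ⟨t, F, hF⟩ := hs.exists_fin
    exact ⟨t, F, hΔ.isDeltaFiltration_iff.mpr hF⟩

end IsHomologicalSystem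

end DeltaFiltrations

theorem memFiltCat_of_ses_and_ellOmega_additive_general
    {Λ : Type u} [Ring Λ] {Ω : Type v} [Preorder Ω] [Fintype Ω]
    (Δ : Ω → Type u) [∀ ω, AddCommGroup (Δ ω)] [∀ ω, Module Λ (Δ ω)]
    [∀ ω, IsLocalRing (Module.End Λ (Δ ω))] (hΔ : IsHomologicalSystem Λ Δ)
    (L M N : Type u) [AddCommGroup L] [Module Λ L] [AddCommGroup M] [Module Λ M]
    [AddCommGroup N] [Module Λ N] (f : L →ₗ[Λ] M) (g : M →ₗ[Λ] N)
    (hf : Function.Injective f) (hg : Function.Surjective g)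
    (hfg : LinearMap.range f = LinearMap.ker g)
    (hL : MemFiltCat Λ Δ L) (hN : MemFiltCat Λ Δ N) :
    MemFiltCat Λ Δ M ∧
      ∀ (tL : ℕ) (FL : Fin (tL + 1) → Submodule Λ L), IsDeltaFiltration Λ Δ tL FL →
      ∀ (tM : ℕ) (FM : Fin (tM + 1) → Submodule Λ M), IsDeltaFiltration Λ Δ tM FM →
      ∀ (tN : ℕ) (FN : Fin (tN + 1) → Submodule Λ N), IsDeltaFiltration Λ Δ tN FN →
      ∀ ω : Ω, ellOmega Λ Δ tM FM ω = ellOmega Λ Δ tL FL ω + ellOmega Λ Δ tN FN ω := by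
  classical
  constructor
  · obtain ⟨s, hs⟩ := hΔ.memFiltCat_iff.mp hL
    obtain ⟨t, ht⟩ := hΔ.memFiltCat_iff.mp hN
    exact hΔ.memFiltCat_iff.mpr ⟨s + t, hs.of_exact hf hg hfg ht⟩
  · intro tL FL hFL tM FM hFM tN FN hFN ω
    obtain ⟨s, hs, ellL⟩ := hΔ.exists_factorChain_of_isDeltaFiltration hFL
    obtain ⟨r, hr, ellM⟩ := hΔ.exists_factorChain_of_isDeltaFiltration hFM
    obtain ⟨t, ht, ellN⟩ := hΔ.exists_factorChain_of_isDeltaFiltration hFN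
    have hsum : r = s + t := hΔ.labels_unique hr (hs.of_exact hf hg hfg ht)
    rw [ellL, ellM, ellN, hsum, Multiset.count_add]

/-- Corollary 9.2: if `0 → L → M → N → 0` is a short exact sequence of `Λ`-modules with
`L, N ∈ 𝔉(Δ)`, then `M ∈ 𝔉(Δ)` and `ℓ_ω (M) = ℓ_ω (L) + ℓ_ω (N)` for every `ω ∈ Ω`
(computed from any `Δ`-filtrations of `L`, `M`, `N`). -/
theorem memFiltCat_of_ses_and_ellOmega_additive
    {R : Type u} [CommRing R] [IsArtinianRing R]
    {Λ : Type u} [Ring Λ] [Algebra R Λ] [Module.Finite R Λ]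
    {Ω : Type v} [Preorder Ω] [Fintype Ω] [Nonempty Ω]
    (Δ : Ω → Type u) [∀ ω, AddCommGroup (Δ ω)] [∀ ω, Module Λ (Δ ω)]
    (hs : IsHomologicalSystem Λ Δ)
    (L M N : Type u) [AddCommGroup L] [Module Λ L] [Module.Finite Λ L]
    [AddCommGroup M] [Module Λ M] [Module.Finite Λ M]
    [AddCommGroup N] [Module Λ N] [Module.Finite Λ N]
    (f : L →ₗ[Λ] M) (g : M →ₗ[Λ] N)
    (hf : Function.Injective f) (hg : Function.Surjective g)
    (hfg : LinearMap.range f = LinearMap.ker g)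
    (hL : MemFiltCat Λ Δ L) (hN : MemFiltCat Λ Δ N) :
    MemFiltCat Λ Δ M ∧
      ∀ (tL : ℕ) (FL : Fin (tL + 1) → Submodule Λ L), IsDeltaFiltration Λ Δ tL FL →
      ∀ (tM : ℕ) (FM : Fin (tM + 1) → Submodule Λ M), IsDeltaFiltration Λ Δ tM FM →
      ∀ (tN : ℕ) (FN : Fin (tN + 1) → Submodule Λ N), IsDeltaFiltration Λ Δ tN FN →
      ∀ ω : Ω, ellOmega Λ Δ tM FM ω = ellOmega Λ Δ tL FL ω + ellOmega Λ Δ tN FN ω := by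
  have := IsArtinianRing.of_finite R Λ
  have (ω : Ω) : IsLocalRing (Module.End Λ (Δ ω)) := hs.isLocalRing_end ω
  exact memFiltCat_of_ses_and_ellOmega_additive_general Δ hs L M N f g hf hg hfg hL hN
end
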